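/- arXiv:2105.14629 — 10 statements merged into one kernel-verified Lean document; each statement's English description precedes it below -/
import Mathlib

section
/- Primal recovery from the dual of ℓ2-norm flow diffusion: suppose x* ∈ ℝ^V with x* ≥ 0 minimizes (1/2)xᵀLx + dᵀx over {x ∈ ℝ^V : x ≥ 0}. Then the flow f* := −CBx* satisfies Bᵀf* ≤ d (so f* is primal feasible), f* minimizes (1/2)fᵀC⁻¹f over {f : Bᵀf ≤ d}, and (1/2)(f*)ᵀC⁻¹f* = −((1/2)(x*)ᵀLx* + dᵀx*); i.e., the primal and dual optimal values are negatives of each other. -/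
/-!
The argument is the KKT conditions for the dual. Write `Q = ∑ e, c e * (B x*) e ^ 2 = x*ᵀ L x*` and
`f* = -C B x*`. Along a direction `y` with `x* + t y ≥ 0` for all `t ∈ (0, 1]`, the dual objective
changes by `t (dᵀy - f*ᵀ B y) + t² / 2 * yᵀ L y`, so minimality forces `f*ᵀ B y ≤ dᵀ y`
(`flow_le_of_feasible_direction`). Coordinate directions give feasibility `Bᵀ f* ≤ d`; the
directions `±x*` give complementary slackness `dᵀ x* = f*ᵀ B x* = -Q`, from which the equality of
values follows, as `f*ᵀ C⁻¹ f* = Q`. For any feasible `f`, pairing `Bᵀ f ≤ d` with `x* ≥ 0` gives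
`fᵀ B x* ≤ -Q`, and expanding `(f + C B x*)ᵀ C⁻¹ (f + C B x*) ≥ 0` yields `fᵀ C⁻¹ f ≥ Q`.
-/

open Matrix Finset

lemma quadForm_eq_sum {V E : Type*} [Fintype V] [Fintype E] [DecidableEq E]
    (B : Matrix E V ℝ) (c : E → ℝ) (x : V → ℝ) :
    x ⬝ᵥ (Bᵀ * Matrix.diagonal c * B).mulVec x = ∑ e, c e * (B.mulVec x e) ^ 2 := by
  rw [← Matrix.mulVec_mulVec, ← Matrix.mulVec_mulVec, Matrix.dotProduct_mulVec,
    Matrix.vecMul_transpose]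
  simp only [dotProduct, Matrix.mulVec_diagonal]
  exact Finset.sum_congr rfl fun e _ => by ring

lemma linear_coeff_nonneg {g q : ℝ}
    (h : ∀ t : ℝ, 0 < t → t ≤ 1 → 0 ≤ t * g + t ^ 2 / 2 * q) : 0 ≤ g := by
  by_contra! hg
  -- This step satisfies `t * |q| ≤ -g`, so the quadratic term is at most half the linear one.
  have hpos : 0 < |q| - g := by linarith [abs_nonneg q]
  set t := -g / (|q| - g) with ht
  have ht0 : 0 < t := div_pos (by linarith) hpos
  have ht1 : t ≤ 1 := (div_le_one hpos).2 (by linarith [abs_nonneg q])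
  have hmul : t * (|q| - g) = -g := div_mul_cancel₀ _ hpos.ne'
  have h1 := h t ht0 ht1
  have h2 : 0 ≤ g + t / 2 * q := by
    refine nonneg_of_mul_nonneg_right (b := g + t / 2 * q) ?_ ht0
    linarith [h1, (by ring : t * (g + t / 2 * q) = t * g + t ^ 2 / 2 * q)]
  have h3 : t * q ≤ t * |q| := mul_le_mul_of_nonneg_left (le_abs_self q) ht0.le
  nlinarith

/-- First-order optimality of the dual minimizer along a feasible direction `y`, expressed through
the recovered flow `-C B x*`. -/
lemma flow_le_of_feasible_direction {V E : Type*} [Fintype V] [Fintype E] [DecidableEq E]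
    (B : Matrix E V ℝ) (c : E → ℝ) (d xstar : V → ℝ)
    (hmin : ∀ x : V → ℝ, (∀ v, 0 ≤ x v) →
      (1/2) * (xstar ⬝ᵥ (Bᵀ * Matrix.diagonal c * B).mulVec xstar) + d ⬝ᵥ xstar ≤
      (1/2) * (x ⬝ᵥ (Bᵀ * Matrix.diagonal c * B).mulVec x) + d ⬝ᵥ x)
    (y : V → ℝ) (hy : ∀ t : ℝ, 0 < t → t ≤ 1 → ∀ v, 0 ≤ xstar v + t * y v) :
    (fun e => -(c e * (B.mulVec xstar) e)) ⬝ᵥ B.mulVec y ≤ d ⬝ᵥ y := by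
  rw [← sub_nonneg]
  refine linear_coeff_nonneg (q := ∑ e, c e * (B.mulVec y e) ^ 2) fun t ht0 ht1 => ?_
  have h := hmin (xstar + t • y) (by simpa using hy t ht0 ht1)
  have hexp : ∑ e, c e * (B.mulVec (xstar + t • y) e) ^ 2
      = ∑ e, c e * (B.mulVec xstar e) ^ 2
        - 2 * t * ((fun e => -(c e * (B.mulVec xstar) e)) ⬝ᵥ B.mulVec y)
        + t ^ 2 * ∑ e, c e * (B.mulVec y e) ^ 2 := by
    simp only [dotProduct, Finset.mul_sum, ← Finset.sum_sub_distrib, ← Finset.sum_add_distrib]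
    refine Finset.sum_congr rfl fun e _ => ?_
    simp only [Matrix.mulVec_add, Matrix.mulVec_smul, Pi.add_apply, Pi.smul_apply, smul_eq_mul]
    ring
  rw [quadForm_eq_sum, quadForm_eq_sum, hexp, dotProduct_add, dotProduct_smul, smul_eq_mul] at h
  linarith

/-- **Primal recovery from the dual of ℓ2-norm flow diffusion.**
If `x*` ≥ 0 minimizes the dual objective `(1/2)xᵀLx + dᵀx` over the nonnegative
orthant, then the flow `f* = −CBx*` is primal feasible (`Bᵀf* ≤ d`), minimizes the
energy `(1/2)fᵀC⁻¹f` among primal feasible flows, and its energy equals minus the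
optimal dual value. -/
theorem l2_flow_diffusion_primal_recovery
    {V E : Type*} [Fintype V] [Fintype E] [DecidableEq E]
    (B : Matrix E V ℝ) (c : E → ℝ) (hc : ∀ e, 0 < c e) (d : V → ℝ)
    (xstar : V → ℝ) (hx0 : ∀ v, 0 ≤ xstar v)
    (hmin : ∀ x : V → ℝ, (∀ v, 0 ≤ x v) →
      (1/2) * (xstar ⬝ᵥ (Bᵀ * Matrix.diagonal c * B).mulVec xstar) + d ⬝ᵥ xstar ≤
      (1/2) * (x ⬝ᵥ (Bᵀ * Matrix.diagonal c * B).mulVec x) + d ⬝ᵥ x)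
    (fstar : E → ℝ) (hfstar : fstar = fun e => -(c e * (B.mulVec xstar) e)) :
    (∀ v, (Bᵀ.mulVec fstar) v ≤ d v) ∧
    (∀ f : E → ℝ, (∀ v, (Bᵀ.mulVec f) v ≤ d v) →
      (1/2) * ∑ e, (fstar e)^2 / c e ≤ (1/2) * ∑ e, (f e)^2 / c e) ∧
    (1/2) * ∑ e, (fstar e)^2 / c e =
      -((1/2) * (xstar ⬝ᵥ (Bᵀ * Matrix.diagonal c * B).mulVec xstar) + d ⬝ᵥ xstar) := by
  classical
  have hdir := flow_le_of_feasible_direction B c d xstar hmin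
  rw [← hfstar] at hdir
  set Q := ∑ e, c e * (B.mulVec xstar e) ^ 2 with hQ
  have henergy : ∑ e, (fstar e) ^ 2 / c e = Q := by
    refine Finset.sum_congr rfl fun e _ => ?_
    have := (hc e).ne'
    subst hfstar
    field_simp
  have hpair : fstar ⬝ᵥ B.mulVec xstar = -Q := by
    rw [hQ, hfstar, dotProduct, ← Finset.sum_neg_distrib]
    exact Finset.sum_congr rfl fun e _ => by ring
  have hslack : d ⬝ᵥ xstar = -Q := by
    have h1 := hdir xstar fun t ht0 _ v => by
      have := mul_nonneg ht0.le (hx0 v)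
      linarith [hx0 v]
    have h2 := hdir (-xstar) fun t _ ht1 v => by
      have := mul_nonneg (sub_nonneg.2 ht1) (hx0 v)
      simp only [Pi.neg_apply]
      linarith
    rw [Matrix.mulVec_neg, dotProduct_neg, dotProduct_neg] at h2
    linarith
  refine ⟨fun v => ?_, fun f hf => ?_, ?_⟩
  · have h := hdir (Pi.single v 1) fun t ht0 _ w => by
      have : 0 ≤ (Pi.single v 1 : V → ℝ) w := by
        by_cases hw : w = v
        · subst hw; simp
        · simp [hw]
      exact add_nonneg (hx0 w) (mul_nonneg ht0.le this)
    rw [Matrix.dotProduct_mulVec, dotProduct_single_one, dotProduct_single_one] at h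
    rwa [Matrix.mulVec_transpose]
  · have hweak : f ⬝ᵥ B.mulVec xstar ≤ -Q := by
      rw [← hslack, Matrix.dotProduct_mulVec, ← Matrix.mulVec_transpose]
      exact Finset.sum_le_sum fun v _ => mul_le_mul_of_nonneg_right (hf v) (hx0 v)
    have hsq : 0 ≤ ∑ e, (f e + c e * B.mulVec xstar e) ^ 2 / c e :=
      Finset.sum_nonneg fun e _ => div_nonneg (sq_nonneg _) (hc e).le
    have hexp : ∑ e, (f e + c e * B.mulVec xstar e) ^ 2 / c e
        = ∑ e, (f e) ^ 2 / c e + 2 * (f ⬝ᵥ B.mulVec xstar) + Q := by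
      simp only [hQ, dotProduct, Finset.mul_sum, ← Finset.sum_add_distrib]
      refine Finset.sum_congr rfl fun e _ => ?_
      have := (hc e).ne'
      field_simp
      ring
    rw [henergy]
    linarith
  · rw [henergy, quadForm_eq_sum, hslack]
    ring
end

section
/- Spectral approximation from mutual low-energy flow routings: let G and H be connected weighted graphs on the same vertex set V, with incidence matrices B_G ∈ ℝ^{E_G×V}, B_H ∈ ℝ^{E_H×V}, positive conductance diagonals C_G, C_H, resistance diagonals R_G = C_G⁻¹, R_H = C_H⁻¹, and Laplacians L(G) = B_GᵀC_GB_G, L(H) = B_HᵀC_HB_H. Suppose there are linear maps Π_{G→H}: ℝ^{E_G} → ℝ^{E_H} and Π_{H→G}: ℝ^{E_H} → ℝ^{E_G} such that (i) B_Gᵀf = B_HᵀΠ_{G→H}(f) for all f ∈ ℝ^{E_G} and Π_{G→H}(f)ᵀR_HΠ_{G→H}(f) ≤ 10·fᵀR_Gf for all f, and (ii) B_Hᵀy = B_GᵀΠ_{H→G}(y) for all y ∈ ℝ^{E_H} and Π_{H→G}(y)ᵀR_GΠ_{H→G}(y) ≤ 10·yᵀR_Hy for all y. Then 0.1·L(G)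 ⪯ L(H) ⪯ 10·L(G), i.e., L(H) − 0.1·L(G) and 10·L(G) − L(H) are positive semidefinite. -/
/-!
Fix potentials `x` and let `f = C_G B_G x` be the electrical flow they induce in `G`, so that
`fᵀ R_G f = xᵀ L(G) x`. Since routing preserves residues,
`xᵀ L(G) x = xᵀ B_Gᵀ f = xᵀ B_Hᵀ Π(f) = (B_H x)ᵀ Π(f)`. Young's inequality, weighted edge by edge,
gives `2 (B_H x)ᵀ Π(f) ≤ 10 xᵀ L(H) x + (1/10) Π(f)ᵀ R_H Π(f)`, and the last term is at most
`xᵀ L(G) x` by the energy bound. Hence `xᵀ L(G) x ≤ 10 xᵀ L(H) x` (`laplacian_form_le_of_routing`).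
Applying this in both directions gives the two claims.
-/

open Matrix Finset

lemma laplacian_form_eq_sum {V E : Type*} [Fintype V] [Fintype E] [DecidableEq E]
    (B : Matrix E V ℝ) (c : E → ℝ) (x : V → ℝ) :
    x ⬝ᵥ (Bᵀ * Matrix.diagonal c * B) *ᵥ x = ∑ e, c e * (B *ᵥ x) e ^ 2 := by
  rw [← Matrix.mulVec_mulVec, ← Matrix.mulVec_mulVec, Matrix.dotProduct_mulVec,
    Matrix.vecMul_transpose]
  simp only [dotProduct, Matrix.mulVec_diagonal]
  exact Finset.sum_congr rfl fun e _ => by ring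

lemma laplacian_isHermitian {V E : Type*} [Fintype E] [DecidableEq E]
    (B : Matrix E V ℝ) (c : E → ℝ) : (Bᵀ * Matrix.diagonal c * B).IsHermitian := by
  simp [Matrix.IsHermitian, Matrix.conjTranspose_eq_transpose_of_trivial,
    Matrix.transpose_mul, Matrix.mul_assoc]

/-- A routing of `G` in `H` that increases energy by a factor of at most `10` bounds the
quadratic form of `L(G)` by `10` times that of `L(H)`. -/
lemma laplacian_form_le_of_routing {V EG EH : Type*} [Fintype V] [Fintype EG] [Fintype EH]
    [DecidableEq EG] [DecidableEq EH]
    (BG : Matrix EG V ℝ) (BH : Matrix EH V ℝ)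
    (cG : EG → ℝ) (cH : EH → ℝ) (hcG : ∀ e, 0 < cG e) (hcH : ∀ e, 0 < cH e)
    (P : (EG → ℝ) → (EH → ℝ))
    (hres : ∀ f : EG → ℝ, BGᵀ.mulVec f = BHᵀ.mulVec (P f))
    (heng : ∀ f : EG → ℝ,
      (P f) ⬝ᵥ (Matrix.diagonal fun e => (cH e)⁻¹).mulVec (P f) ≤
        10 * (f ⬝ᵥ (Matrix.diagonal fun e => (cG e)⁻¹).mulVec f)) (x : V → ℝ) :
    x ⬝ᵥ (BGᵀ * Matrix.diagonal cG * BG) *ᵥ x ≤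
      10 * (x ⬝ᵥ (BHᵀ * Matrix.diagonal cH * BH) *ᵥ x) := by
  -- the electrical flow in `G` induced by the potentials `x`
  set f : EG → ℝ := Matrix.diagonal cG *ᵥ (BG *ᵥ x) with hf
  have hform : x ⬝ᵥ (BGᵀ * Matrix.diagonal cG * BG) *ᵥ x = ∑ e, (BH *ᵥ x) e * P f e := by
    rw [← Matrix.mulVec_mulVec, ← Matrix.mulVec_mulVec, ← hf, hres, Matrix.dotProduct_mulVec,
      Matrix.vecMul_transpose]
    rfl
  have henergy : f ⬝ᵥ (Matrix.diagonal fun e => (cG e)⁻¹).mulVec f =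
      x ⬝ᵥ (BGᵀ * Matrix.diagonal cG * BG) *ᵥ x := by
    rw [laplacian_form_eq_sum]
    simp only [hf, dotProduct, Matrix.mulVec_diagonal]
    refine Finset.sum_congr rfl fun e _ => ?_
    have := (hcG e).ne'
    field_simp
  have hrouted : (P f) ⬝ᵥ (Matrix.diagonal fun e => (cH e)⁻¹).mulVec (P f) =
      ∑ e, (cH e)⁻¹ * P f e ^ 2 := by
    simp only [dotProduct, Matrix.mulVec_diagonal]
    exact Finset.sum_congr rfl fun e _ => by ring
  have hyoung : 2 * ∑ e, (BH *ᵥ x) e * P f e ≤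
      10 * ∑ e, cH e * (BH *ᵥ x) e ^ 2 + 1 / 10 * ∑ e, (cH e)⁻¹ * P f e ^ 2 := by
    rw [Finset.mul_sum, Finset.mul_sum, Finset.mul_sum, ← Finset.sum_add_distrib]
    refine Finset.sum_le_sum fun e _ => ?_
    have hc := hcH e
    have hsq : 10 * (cH e * (BH *ᵥ x) e ^ 2) + 1 / 10 * ((cH e)⁻¹ * P f e ^ 2)
        - 2 * ((BH *ᵥ x) e * P f e)
        = (cH e)⁻¹ / 10 * (10 * cH e * (BH *ᵥ x) e - P f e) ^ 2 := by
      field_simp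
      ring
    have hnonneg : 0 ≤ (cH e)⁻¹ / 10 * (10 * cH e * (BH *ᵥ x) e - P f e) ^ 2 := by positivity
    linarith
  have hbound := heng f
  rw [henergy, hrouted] at hbound
  rw [laplacian_form_eq_sum BH cH x]
  linarith

/-- **Spectral approximation from mutual low-energy flow routings.**
If connected weighted graphs `G` and `H` on the same vertex set admit flow
routings in both directions that preserve residues and increase energy by at most
a factor of 10, then `0.1·L(G) ⪯ L(H) ⪯ 10·L(G)`. -/
theorem spectral_approx_of_flow_routings
    {V EG EH : Type*} [Fintype V] [DecidableEq V] [Fintype EG] [Fintype EH]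
    [DecidableEq EG] [DecidableEq EH]
    (BG : Matrix EG V ℝ) (BH : Matrix EH V ℝ)
    (hBG : ∀ e : EG, ∃ u v : V, u ≠ v ∧
      (∀ w, BG e w = if w = u then 1 else if w = v then -1 else 0))
    (hBH : ∀ e : EH, ∃ u v : V, u ≠ v ∧
      (∀ w, BH e w = if w = u then 1 else if w = v then -1 else 0))
    (cG : EG → ℝ) (cH : EH → ℝ) (hcG : ∀ e, 0 < cG e) (hcH : ∀ e, 0 < cH e)
    (LG : Matrix V V ℝ) (hLG : LG = BGᵀ * Matrix.diagonal cG * BG)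
    (LH : Matrix V V ℝ) (hLH : LH = BHᵀ * Matrix.diagonal cH * BH)
    (hGconn : ∀ x : V → ℝ, LG.mulVec x = 0 ↔ ∃ t : ℝ, x = Function.const V t)
    (hHconn : ∀ x : V → ℝ, LH.mulVec x = 0 ↔ ∃ t : ℝ, x = Function.const V t)
    (RouteGH : (EG → ℝ) →ₗ[ℝ] (EH → ℝ)) (RouteHG : (EH → ℝ) →ₗ[ℝ] (EG → ℝ))
    (hres1 : ∀ f : EG → ℝ, BGᵀ.mulVec f = BHᵀ.mulVec (RouteGH f))
    (heng1 : ∀ f : EG → ℝ,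
      (RouteGH f) ⬝ᵥ (Matrix.diagonal fun e => (cH e)⁻¹).mulVec (RouteGH f) ≤
        10 * (f ⬝ᵥ (Matrix.diagonal fun e => (cG e)⁻¹).mulVec f))
    (hres2 : ∀ y : EH → ℝ, BHᵀ.mulVec y = BGᵀ.mulVec (RouteHG y))
    (heng2 : ∀ y : EH → ℝ,
      (RouteHG y) ⬝ᵥ (Matrix.diagonal fun e => (cG e)⁻¹).mulVec (RouteHG y) ≤
        10 * (y ⬝ᵥ (Matrix.diagonal fun e => (cH e)⁻¹).mulVec y)) :
    (LH - (0.1 : ℝ) • LG).PosSemidef ∧ ((10 : ℝ) • LG - LH).PosSemidef := by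
  have hG := laplacian_isHermitian BG cG
  have hH := laplacian_isHermitian BH cH
  have hGH := laplacian_form_le_of_routing BG BH cG cH hcG hcH RouteGH hres1 heng1
  have hHG := laplacian_form_le_of_routing BH BG cH cG hcH hcG RouteHG hres2 heng2
  rw [← hLG] at hG
  rw [← hLH] at hH
  rw [← hLG, ← hLH] at hGH hHG
  constructor
  · refine Matrix.PosSemidef.of_dotProduct_mulVec_nonneg
      (hH.sub (hG.smul (IsSelfAdjoint.all _))) fun x => ?_
    rw [star_trivial, Matrix.sub_mulVec, Matrix.smul_mulVec, dotProduct_sub, dotProduct_smul,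
      smul_eq_mul]
    linarith [hGH x]
  · refine Matrix.PosSemidef.of_dotProduct_mulVec_nonneg
      ((hG.smul (IsSelfAdjoint.all _)).sub hH) fun x => ?_
    rw [star_trivial, Matrix.sub_mulVec, Matrix.smul_mulVec, dotProduct_sub, dotProduct_smul,
      smul_eq_mul]
    linarith [hHG x]
end

section
/- Convergence of accelerated proximal gradient descent with inexact proximal mappings: let Φ = f + h where f: ℝⁿ → ℝ is convex, differentiable, and 1-smooth with respect to ‖·‖, h: ℝⁿ → ℝ∪{+∞} is proper convex lower semicontinuous, and x* is a minimizer of Φ. Let x⁽⁰⁾ = y⁽⁰⁾ = z⁽⁰⁾, and for k ≥ 0 set α_{k+1} = (k+2)/2, τ_k = 2/(k+2), x⁽ᵏ⁺¹⁾ = (1−τ_k)y⁽ᵏ⁾ + τ_k z⁽ᵏ⁾; assume the model Φ̄_{x⁽ᵏ⁺¹⁾} attains its minimum and y⁽ᵏ⁺¹⁾ satisfies Φ̄_{x⁽ᵏ⁺¹⁾}(y⁽ᵏ⁺¹⁾) ≤ min Φ̄_{x⁽ᵏ⁺¹⁾} + ε_{k+1} with ε_{k+1} ≥ 0; set z⁽ᵏ⁺¹⁾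 = z⁽ᵏ⁾ + α_{k+1}(y⁽ᵏ⁺¹⁾ − x⁽ᵏ⁺¹⁾). Then for every T ≥ 1: Φ(y⁽ᵀ⁾) − Φ(x*) ≤ (2/(T+1)²)·(‖x⁽⁰⁾ − x*‖ + 3·Σ_{k=1}^{T} k·√(2ε_k))². -/
/-!
The proof is a potential-function argument. Write `D k = ‖z k - xstar‖`, `δ k = Φ (y k) - Φ xstar`,
`τ = 2 / (k + 2)` and `s = √(2 ε (k + 1))`.

The model at `x (k + 1)` is 1-strongly convex for the seminorm, so an `ε`-minimizer `y` satisfies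
`Φbar y ≤ Φbar w - d² / 2 + d s + s² / 2` with `d = ‖w - y‖`: compare `y` with the points of the
segment from `y` to `w` (`model_segment`) and optimize the position on it (`strong_growth_bound`).
The comparison point is
`w = (1 - τ) y k + τ xstar`, for which `w - x (k + 1) = τ (xstar - z k)` and
`w - y (k + 1) = τ (xstar - z (k + 1))`. After multiplication by `((k + 2) / 2)²` this yields
`((k + 2) / 2)² δ (k + 1) + D (k + 1)² / 2 ≤ k (k + 2) / 4 * δ k + D k ² / 2 + a D (k + 1) + a² / 2`
for `a = (k + 1) s` (`accelerated_step`). As `k (k + 2) / 4 ≤ ((k + 1) / 2)²`, the left-hand potential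
stays below half of the square of `D 0 + 3 ∑ k √(2 ε k)` (`potential_growth`). The coefficient of
`δ 0` is zero, so it does not matter that `Φ (y 0)` may be infinite.
-/

open Matrix Finset

/-- The seminorm `‖v‖ = √(vᵀAv)` induced by a positive semidefinite matrix `A`. -/
noncomputable def matSeminorm {n : ℕ} (A : Matrix (Fin n) (Fin n) ℝ) (v : Fin n → ℝ) : ℝ :=
  Real.sqrt (v ⬝ᵥ A.mulVec v)

/-- The strong-convexity identity for the quadratic form of `A`. -/
lemma quad_segment {n : ℕ} (A : Matrix (Fin n) (Fin n) ℝ) (a b : Fin n → ℝ) (t : ℝ) :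
    (t • a + (1 - t) • b) ⬝ᵥ A.mulVec (t • a + (1 - t) • b) =
      t * (a ⬝ᵥ A.mulVec a) + (1 - t) * (b ⬝ᵥ A.mulVec b)
        - t * (1 - t) * ((a - b) ⬝ᵥ A.mulVec (a - b)) := by
  simp only [Matrix.mulVec_add, Matrix.mulVec_sub, Matrix.mulVec_smul, add_dotProduct,
    dotProduct_add, sub_dotProduct, dotProduct_sub, smul_dotProduct, dotProduct_smul, smul_eq_mul]
  ring

lemma quad_smul {n : ℕ} (A : Matrix (Fin n) (Fin n) ℝ) (a : Fin n → ℝ) (t : ℝ) :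
    (t • a) ⬝ᵥ A.mulVec (t • a) = t ^ 2 * (a ⬝ᵥ A.mulVec a) := by
  simp only [Matrix.mulVec_smul, smul_dotProduct, dotProduct_smul, smul_eq_mul]
  ring

lemma quad_sub_comm {n : ℕ} (A : Matrix (Fin n) (Fin n) ℝ) (a b : Fin n → ℝ) :
    (a - b) ⬝ᵥ A.mulVec (a - b) = (b - a) ⬝ᵥ A.mulVec (b - a) := by
  simp only [Matrix.mulVec_sub, dotProduct_sub, sub_dotProduct]
  ring

/-- The optimization over the position `t` on the segment: `t = 1` when `d ≤ 2 s`, `t = s / d`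
when `0 < s < d / 2`, and `t → 0` when `s = 0`. -/
lemma strong_growth_bound (G d s : ℝ) (hs : 0 ≤ s)
    (H : ∀ t : ℝ, 0 ≤ t → t ≤ 1 → t * G + t * (1 - t) / 2 * d ^ 2 ≤ s ^ 2 / 2) (hd : 0 ≤ d) :
    G ≤ -d ^ 2 / 2 + d * s + s ^ 2 / 2 := by
  by_cases h1 : d ≤ 2 * s
  · have := H 1 (by norm_num) le_rfl
    nlinarith
  push Not at h1
  have hd' : 0 < d := by linarith
  rcases hs.eq_or_lt with h0 | h0
  · subst h0
    by_contra hc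
    push Not at hc
    -- With `s = 0`, a positive gap `g = G + d² / 2` is contradicted at `t = g / (g + d²)`.
    have hg : 0 < G + d ^ 2 / 2 := by linarith
    have hq : 0 < G + d ^ 2 / 2 + d ^ 2 := by positivity
    have hlt := H ((G + d ^ 2 / 2) / (G + d ^ 2 / 2 + d ^ 2)) (by positivity)
      (by rw [div_le_one hq]; nlinarith)
    set t := (G + d ^ 2 / 2) / (G + d ^ 2 / 2 + d ^ 2) with ht
    have htp : 0 < t := by positivity
    have hte : t * (G + d ^ 2 / 2 + d ^ 2) = G + d ^ 2 / 2 := by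
      rw [ht]; exact div_mul_cancel₀ _ hq.ne'
    have h3 : t * (G + d ^ 2 / 2 - t * d ^ 2 / 2) ≤ 0 := by linarith
    have h4 : 0 < G + d ^ 2 / 2 - t * d ^ 2 / 2 := by
      nlinarith [mul_pos htp hg, mul_pos htp (pow_pos hd' 2)]
    nlinarith [mul_pos htp h4]
  · have hlt := H (s / d) (by positivity) (by rw [div_le_one hd']; linarith)
    have e : s / d * G + s / d * (1 - s / d) / 2 * d ^ 2
        = s / d * (G + d ^ 2 / 2) - s ^ 2 / 2 := by field_simp; ring
    rw [e] at hlt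
    have h5 : s / d * (G + d ^ 2 / 2) ≤ s / d * (d * s) := by
      have : s / d * (d * s) = s ^ 2 := by field_simp
      linarith
    have := le_of_mul_le_mul_left h5 (by positivity)
    nlinarith [sq_nonneg s]

/-- One step of the growth of the potential `P ≥ D² / 2`: the self-referential error term `a * D`
costs at most an increase of `3 * a` in the square root. -/
lemma potential_growth (P D B a : ℝ) (ha : 0 ≤ a) (hB : 0 ≤ B)
    (hDP : D ^ 2 / 2 ≤ P) (hP : P ≤ B ^ 2 / 2 + a * D + a ^ 2 / 2) :
    P ≤ (B + 3 * a) ^ 2 / 2 := by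
  have hD : D ≤ B + 3 * a := by
    by_contra hc
    push Not at hc
    nlinarith [mul_nonneg ha hB]
  nlinarith [mul_nonneg ha hB, mul_le_mul_of_nonneg_left hD ha]

/-- Comparison of an `ε`-minimizer `u` of the model at `p` with the points of the segment from `u`
to `w`. The numbers `Hu` and `Hw` are the (finite) value of `h` at `u` and an upper bound at `w`. -/
lemma model_segment {n : ℕ} (A : Matrix (Fin n) (Fin n) ℝ) (h : (Fin n → ℝ) → EReal)
    (hhconv : ∀ (a b : Fin n → ℝ) (t : ℝ), 0 ≤ t → t ≤ 1 →
      h (t • a + (1 - t) • b) ≤ (t : EReal) * h a + ((1 - t : ℝ) : EReal) * h b)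
    (c ε Hu Hw : ℝ) (g p u w : Fin n → ℝ) (hu : h u = (Hu : EReal)) (hw : h w ≤ (Hw : EReal))
    (happ : ∀ v, ((c + g ⬝ᵥ (u - p) + (1/2) * ((u - p) ⬝ᵥ A.mulVec (u - p)) : ℝ) : EReal) + h u ≤
      ((c + g ⬝ᵥ (v - p) + (1/2) * ((v - p) ⬝ᵥ A.mulVec (v - p)) : ℝ) : EReal) + h v + (ε : EReal))
    (t : ℝ) (ht0 : 0 ≤ t) (ht1 : t ≤ 1) :
    t * ((c + g ⬝ᵥ (u - p) + (1/2) * ((u - p) ⬝ᵥ A.mulVec (u - p)) + Hu) -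
        (c + g ⬝ᵥ (w - p) + (1/2) * ((w - p) ⬝ᵥ A.mulVec (w - p)) + Hw))
      + t * (1 - t) / 2 * ((w - u) ⬝ᵥ A.mulVec (w - u)) ≤ ε := by
  have hv : h (t • w + (1 - t) • u) ≤ ((t * Hw + (1 - t) * Hu : ℝ) : EReal) := by
    refine (hhconv w u t ht0 ht1).trans ?_
    rw [hu]
    push_cast
    gcongr
  have key := happ (t • w + (1 - t) • u)
  rw [hu] at key
  have key2 := key.trans (add_le_add_left (add_le_add_right hv _) _)
  have key3 : c + g ⬝ᵥ (u - p) + (1/2) * ((u - p) ⬝ᵥ A.mulVec (u - p)) + Hu ≤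
      c + g ⬝ᵥ (t • w + (1 - t) • u - p) + (1/2) * ((t • w + (1 - t) • u - p) ⬝ᵥ
        A.mulVec (t • w + (1 - t) • u - p)) + (t * Hw + (1 - t) * Hu) + ε := by
    exact_mod_cast key2
  have e : t • w + (1 - t) • u - p = t • (w - p) + (1 - t) • (u - p) := by module
  rw [e, quad_segment, dotProduct_add, dotProduct_smul, dotProduct_smul, smul_eq_mul, smul_eq_mul,
    sub_sub_sub_cancel_right] at key3
  linarith

/-- One accelerated step: the decrease inequality for the potential, with the gap at the old
iterate `y₀` weighted by `k * (k + 2) / 4`. `Hy`, `Hu`, `Hs` stand for the values of `h` at `y₀`, `u`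
and `xs`; at `k = 0` the number `Hy` is arbitrary, as `h y₀` may be infinite there. -/
lemma accelerated_step {n : ℕ} (A : Matrix (Fin n) (Fin n) ℝ) (hA : A.PosSemidef)
    (f : (Fin n → ℝ) → ℝ) (g : Fin n → ℝ) (h : (Fin n → ℝ) → EReal)
    (hhconv : ∀ (a b : Fin n → ℝ) (t : ℝ), 0 ≤ t → t ≤ 1 →
      h (t • a + (1 - t) • b) ≤ (t : EReal) * h a + ((1 - t : ℝ) : EReal) * h b)
    (k : ℕ) (p y₀ z₀ u z₁ xs : Fin n → ℝ) (ε Hy Hu Hs : ℝ) (hε : 0 ≤ ε)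
    (hconv : ∀ b, f p + g ⬝ᵥ (b - p) ≤ f b)
    (hsmooth : f u ≤ f p + g ⬝ᵥ (u - p) + (1/2) * ((u - p) ⬝ᵥ A.mulVec (u - p)))
    (hp : p = (1 - 2/((k : ℝ)+2)) • y₀ + (2/((k : ℝ)+2)) • z₀)
    (hz : z₁ = z₀ + (((k : ℝ)+2)/2) • (u - p))
    (hy : k ≠ 0 → h y₀ = (Hy : EReal)) (hu : h u = (Hu : EReal)) (hs : h xs = (Hs : EReal))
    (happ : ∀ v, ((f p + g ⬝ᵥ (u - p) + (1/2) * ((u - p) ⬝ᵥ A.mulVec (u - p)) : ℝ) : EReal) + h u ≤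
      ((f p + g ⬝ᵥ (v - p) + (1/2) * ((v - p) ⬝ᵥ A.mulVec (v - p)) : ℝ) : EReal) + h v
        + (ε : EReal)) :
    (((k : ℝ) + 2) / 2) ^ 2 * (f u + Hu - (f xs + Hs)) + (matSeminorm A (z₁ - xs)) ^ 2 / 2 ≤
      (k : ℝ) * (k + 2) / 4 * (f y₀ + Hy - (f xs + Hs)) + (matSeminorm A (z₀ - xs)) ^ 2 / 2
        + ((k + 1) * Real.sqrt (2 * ε)) * matSeminorm A (z₁ - xs)
        + ((k + 1) * Real.sqrt (2 * ε)) ^ 2 / 2 := by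
  have hq : ∀ v : Fin n → ℝ, 0 ≤ v ⬝ᵥ A.mulVec v := fun v => by
    simpa using hA.dotProduct_mulVec_nonneg v
  have hk : (0 : ℝ) ≤ k := Nat.cast_nonneg k
  have hk2 : (k : ℝ) + 2 ≠ 0 := by positivity
  set τ : ℝ := 2 / ((k : ℝ) + 2) with hτ
  have hτ0 : 0 < τ := by positivity
  have hτ1 : τ ≤ 1 := by rw [hτ, div_le_one (by positivity)]; linarith
  have hατ : τ * (((k : ℝ) + 2) / 2) = 1 := by rw [hτ]; field_simp
  set w : Fin n → ℝ := (1 - τ) • y₀ + τ • xs with hw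
  have hwp : w - p = τ • (xs - z₀) := by rw [hw, hp]; module
  have hwp' : w - p = (1 - τ) • (y₀ - p) + τ • (xs - p) := by rw [hw]; module
  have hwu : w - u = τ • (xs - z₁) := by
    have : τ • (xs - z₁) = τ • (xs - z₀) - (τ * (((k : ℝ) + 2) / 2)) • (u - p) := by
      rw [hz]; module
    rw [this, hατ, ← hwp]; module
  have hhw : h w ≤ (((1 - τ) * Hy + τ * Hs : ℝ) : EReal) := by
    have h1 := hhconv y₀ xs (1 - τ) (by linarith) (by linarith)
    rw [sub_sub_cancel, hs] at h1
    refine h1.trans ?_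
    by_cases hk0 : k = 0
    · have h10 : 1 - τ = 0 := by rw [hτ, hk0]; norm_num
      rw [h10]; simp
    · rw [hy hk0]; push_cast; exact le_rfl
  set G := (f p + g ⬝ᵥ (u - p) + (1/2) * ((u - p) ⬝ᵥ A.mulVec (u - p)) + Hu) -
        (f p + g ⬝ᵥ (w - p) + (1/2) * ((w - p) ⬝ᵥ A.mulVec (w - p)) + ((1 - τ) * Hy + τ * Hs)) with hG
  set D₁ := matSeminorm A (z₁ - xs) with hD₁
  set D₀ := matSeminorm A (z₀ - xs) with hD₀
  set s := Real.sqrt (2 * ε) with hs'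
  have hD₁0 : 0 ≤ D₁ := Real.sqrt_nonneg _
  have hs0 : 0 ≤ s := Real.sqrt_nonneg _
  have hss : s ^ 2 = 2 * ε := Real.sq_sqrt (by positivity)
  have hD₁s : D₁ ^ 2 = (xs - z₁) ⬝ᵥ A.mulVec (xs - z₁) := by
    rw [quad_sub_comm]; exact Real.sq_sqrt (hq _)
  have hD₀s : D₀ ^ 2 = (xs - z₀) ⬝ᵥ A.mulVec (xs - z₀) := by
    rw [quad_sub_comm]; exact Real.sq_sqrt (hq _)
  have hgrow : G ≤ -(τ * D₁) ^ 2 / 2 + (τ * D₁) * s + s ^ 2 / 2 := by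
    refine strong_growth_bound G (τ * D₁) s hs0 (fun t ht0 ht1 => ?_) (by positivity)
    have := model_segment A h hhconv (f p) ε Hu _ g p u w hu hhw happ t ht0 ht1
    rw [hwu, quad_smul, ← hD₁s, ← hG] at this
    rw [hss, mul_pow]
    linarith
  have hlin : f p + g ⬝ᵥ (w - p) ≤ (1 - τ) * f y₀ + τ * f xs := by
    rw [hwp', dotProduct_add, dotProduct_smul, dotProduct_smul, smul_eq_mul, smul_eq_mul]
    have h1 := mul_le_mul_of_nonneg_left (hconv y₀) (by linarith : 0 ≤ 1 - τ)
    have h2 := mul_le_mul_of_nonneg_left (hconv xs) hτ0.le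
    linarith
  have hqw : (w - p) ⬝ᵥ A.mulVec (w - p) = τ ^ 2 * D₀ ^ 2 := by rw [hwp, quad_smul, hD₀s]
  rw [hqw] at hG
  have hmain : f u + Hu - (f xs + Hs) ≤ (1 - τ) * (f y₀ + Hy - (f xs + Hs)) + τ ^ 2 * D₀ ^ 2 / 2
      - τ ^ 2 * D₁ ^ 2 / 2 + τ * D₁ * s + s ^ 2 / 2 := by
    linarith
  set α : ℝ := ((k : ℝ) + 2) / 2 with hα
  have hα0 : 0 ≤ α := by positivity
  have hαk : α ≤ k + 1 := by rw [hα]; linarith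
  have hscaled := mul_le_mul_of_nonneg_left hmain (sq_nonneg α)
  have e : α ^ 2 * ((1 - τ) * (f y₀ + Hy - (f xs + Hs)) + τ ^ 2 * D₀ ^ 2 / 2
      - τ ^ 2 * D₁ ^ 2 / 2 + τ * D₁ * s + s ^ 2 / 2) =
      (k : ℝ) * (k + 2) / 4 * (f y₀ + Hy - (f xs + Hs)) + D₀ ^ 2 / 2 - D₁ ^ 2 / 2
        + (α * s) * D₁ + (α * s) ^ 2 / 2 := by
    rw [hα, hτ]; field_simp; ring
  rw [e] at hscaled
  have hαs : α * s ≤ (k + 1) * s := mul_le_mul_of_nonneg_right hαk hs0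
  have h1 := mul_le_mul_of_nonneg_right hαs hD₁0
  have h2 := pow_le_pow_left₀ (by positivity : 0 ≤ α * s) hαs 2
  linarith

/-- **Convergence of accelerated proximal gradient descent with inexact proximal
mappings.**  Let `Φ = f + h` with `f` convex, differentiable and 1-smooth w.r.t. the
seminorm induced by a symmetric psd matrix `A`, and `h` proper convex lower
semicontinuous (extended-real valued).  Run the accelerated scheme with inexact
proximal mappings of additive error `ε_k ≥ 0`.  Then for every `T ≥ 1`,
`Φ(y⁽ᵀ⁾) − Φ(x*) ≤ (2/(T+1)²)·(‖x⁽⁰⁾ − x*‖ + 3·Σ_{k=1}^T k·√(2ε_k))²`. -/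
theorem inexact_accelerated_proximal_gradient_convergence
    {n : ℕ} (A : Matrix (Fin n) (Fin n) ℝ) (hA : A.PosSemidef)
    (f : (Fin n → ℝ) → ℝ) (f' : (Fin n → ℝ) → (Fin n → ℝ))
    (hconv : ∀ a b, f a + f' a ⬝ᵥ (b - a) ≤ f b)
    (hsmooth : ∀ a b,
      f b ≤ f a + f' a ⬝ᵥ (b - a) + (1/2) * ((b - a) ⬝ᵥ A.mulVec (b - a)))
    (h : (Fin n → ℝ) → EReal)
    (hproper : ∃ w, h w ≠ ⊤) (hnotbot : ∀ w, h w ≠ ⊥)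
    (hhconv : ∀ (a b : Fin n → ℝ) (t : ℝ), 0 ≤ t → t ≤ 1 →
      h (t • a + (1 - t) • b) ≤ (t : EReal) * h a + ((1 - t : ℝ) : EReal) * h b)
    (hlsc : LowerSemicontinuous h)
    (Φ : (Fin n → ℝ) → EReal) (hΦ : ∀ w, Φ w = (f w : EReal) + h w)
    (Φbar : (Fin n → ℝ) → (Fin n → ℝ) → EReal)
    (hΦbar : ∀ x y, Φbar x y =
      ((f x + f' x ⬝ᵥ (y - x)
        + (1/2) * ((y - x) ⬝ᵥ A.mulVec (y - x)) : ℝ) : EReal) + h y)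
    (xstar : Fin n → ℝ) (hxstar : ∀ w, Φ xstar ≤ Φ w)
    (x y z : ℕ → Fin n → ℝ) (ε : ℕ → ℝ)
    (hε : ∀ k, 1 ≤ k → 0 ≤ ε k)
    (hinit : x 0 = y 0 ∧ x 0 = z 0)
    (hxk : ∀ k : ℕ,
      x (k+1) = (1 - 2/((k : ℝ)+2)) • y k + (2/((k : ℝ)+2)) • z k)
    (hattain : ∀ k : ℕ, ∃ p, ∀ w, Φbar (x (k+1)) p ≤ Φbar (x (k+1)) w)
    (happrox : ∀ (k : ℕ) (w : Fin n → ℝ),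
      Φbar (x (k+1)) (y (k+1)) ≤ Φbar (x (k+1)) w + (ε (k+1) : EReal))
    (hzk : ∀ k : ℕ,
      z (k+1) = z k + (((k : ℝ)+2)/2) • (y (k+1) - x (k+1))) :
    ∀ T : ℕ, 1 ≤ T →
      Φ (y T) ≤ Φ xstar +
        (((2 / ((T : ℝ)+1)^2) *
          (matSeminorm A (x 0 - xstar)
            + 3 * ∑ k ∈ Finset.Icc 1 T, (k : ℝ) * Real.sqrt (2 * ε k))^2 : ℝ) : EReal) := by
  obtain ⟨w₀, hw₀⟩ := hproper
  have hstar_top : h xstar ≠ ⊤ := by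
    intro htop
    have h1 := hxstar w₀
    rw [hΦ, hΦ, htop, EReal.coe_add_top, top_le_iff] at h1
    exact EReal.add_ne_top (EReal.coe_ne_top _) hw₀ h1
  have hstar := (EReal.coe_toReal hstar_top (hnotbot xstar)).symm
  have hfin : ∀ k, h (y (k + 1)) ≠ ⊤ := by
    intro k htop
    have h1 := happrox k xstar
    rw [hΦbar, hΦbar, htop, EReal.coe_add_top, top_le_iff] at h1
    exact EReal.add_ne_top (EReal.add_ne_top (EReal.coe_ne_top _) hstar_top)
      (EReal.coe_ne_top _) h1
  have hyfin := fun k => (EReal.coe_toReal (hfin k) (hnotbot (y (k + 1)))).symm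
  set δ : ℕ → ℝ := fun k => f (y k) + (h (y k)).toReal - (f xstar + (h xstar).toReal) with hδ
  have hδ0 : ∀ k, 0 ≤ δ (k + 1) := by
    intro k
    have h1 := hxstar (y (k + 1))
    rw [hΦ, hΦ, hstar, hyfin k] at h1
    have h2 : f xstar + (h xstar).toReal ≤ f (y (k + 1)) + (h (y (k + 1))).toReal := by
      exact_mod_cast h1
    simp only [hδ]
    linarith
  set S : ℕ → ℝ := fun T => matSeminorm A (x 0 - xstar)
    + 3 * ∑ k ∈ Finset.Icc 1 T, (k : ℝ) * Real.sqrt (2 * ε k) with hS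
  have hS0 : ∀ T, 0 ≤ S T := fun T =>
    add_nonneg (Real.sqrt_nonneg _) (mul_nonneg (by norm_num)
      (Finset.sum_nonneg fun k _ => mul_nonneg (Nat.cast_nonneg k) (Real.sqrt_nonneg _)))
  have hSsucc : ∀ T, S (T + 1) = S T + 3 * (((T : ℝ) + 1) * Real.sqrt (2 * ε (T + 1))) := by
    intro T
    simp only [hS]
    rw [Finset.sum_Icc_succ_top (by omega)]
    push_cast
    ring
  have hstep : ∀ k : ℕ,
      (k : ℝ) * (k + 2) / 4 * δ k + (matSeminorm A (z k - xstar)) ^ 2 / 2 ≤ S k ^ 2 / 2 →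
      (((k : ℝ) + 2) / 2) ^ 2 * δ (k + 1) + (matSeminorm A (z (k + 1) - xstar)) ^ 2 / 2
        ≤ S (k + 1) ^ 2 / 2 := by
    intro k hk
    have hacc := accelerated_step A hA f (f' (x (k + 1))) h hhconv k (x (k + 1)) (y k) (z k)
      (y (k + 1)) (z (k + 1)) xstar (ε (k + 1)) (h (y k)).toReal (h (y (k + 1))).toReal
      (h xstar).toReal (hε _ (by omega)) (hconv _) (hsmooth _ _) (hxk k) (hzk k)
      (fun hk0 => by
        obtain ⟨m, rfl⟩ := Nat.exists_eq_succ_of_ne_zero hk0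
        exact hyfin m)
      (hyfin k) hstar
      (fun v => by
        have h1 := happrox k v
        rwa [hΦbar, hΦbar] at h1)
    rw [hSsucc]
    refine potential_growth _ (matSeminorm A (z (k + 1) - xstar)) _ _ (by positivity) (hS0 k) ?_ ?_
    · have := mul_nonneg (sq_nonneg (((k : ℝ) + 2) / 2)) (hδ0 k)
      linarith
    · linarith
  have hinv : ∀ k : ℕ,
      (k : ℝ) * (k + 2) / 4 * δ k + (matSeminorm A (z k - xstar)) ^ 2 / 2 ≤ S k ^ 2 / 2 := by
    intro k
    induction k with
    | zero => simp [hS, hinit.2]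
    | succ k ih =>
      have h1 := hstep k ih
      have h2 := hδ0 k
      push_cast
      nlinarith
  intro T hT
  obtain ⟨k, rfl⟩ := Nat.exists_eq_add_of_le' hT
  have h1 := hstep k (hinv k)
  have hbound : δ (k + 1) ≤ 2 / (((k + 1 : ℕ) : ℝ) + 1) ^ 2 * S (k + 1) ^ 2 := by
    have hpos : (0 : ℝ) < (((k + 1 : ℕ) : ℝ) + 1) ^ 2 := by positivity
    rw [div_mul_eq_mul_div, le_div_iff₀ hpos]
    push_cast
    nlinarith [sq_nonneg (matSeminorm A (z (k + 1) - xstar))]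
  rw [hΦ, hΦ, hstar, hyfin k]
  have h2 : f (y (k + 1)) + (h (y (k + 1))).toReal ≤ f xstar + (h xstar).toReal
      + 2 / (((k + 1 : ℕ) : ℝ) + 1) ^ 2 * S (k + 1) ^ 2 := by
    simp only [hδ] at hbound
    linarith
  exact_mod_cast h2
end

section
/- ε-subdifferential of the nonsmooth part at an inexact proximal mapping: let f: ℝⁿ → ℝ be convex and differentiable, h: ℝⁿ → ℝ∪{+∞} proper convex, Φ̄_x(y) = f(x) + ∇f(x)ᵀ(y−x) + (1/2)‖y−x‖² + h(y), and suppose p_x minimizes Φ̄_x and q_x satisfies Φ̄_x(q_x) ≤ Φ̄_x(p_x) + ε with ε ≥ 0. Then there exists s ∈ ℝⁿ with sᵀA⁺s ≤ 2ε such that −s − ∇f̄_x(q_x) ∈ ∂_ε h(q_x), where ∇f̄_x(q_x) = ∇f(x) + A(q_x − x). -/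
/-! The witness is `s = A (px - qx)`, for which `-s - (∇f(x) + A (qx - x))` equals
`g = -∇f(x) - A (px - x)`. Letting `t → 0` in the comparison of `Φbar px` with
`Φbar (px + t (u - px))`, using convexity of `h`, shows that `g` is an exact subgradient of `h`
at `px`. Taking `u = qx` in this inequality gives `Φbar qx ≥ Φbar px + ½ ‖qx - px‖²`, so
`sᵀ A⁺ s = ‖qx - px‖² ≤ 2 ε`. Finally `Φbar qx ≤ Φbar px + ε` rearranges to
`h qx ≤ h px + gᵀ (qx - px) + ε - ½ ‖qx - px‖²`, which transfers the subgradient inequality from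
`px` to `qx` at the cost of `ε`. -/

open Matrix Finset

lemma dotProduct_mulVec_symm {n : ℕ} {A : Matrix (Fin n) (Fin n) ℝ} (hA : A.PosSemidef)
    (v w : Fin n → ℝ) : v ⬝ᵥ A *ᵥ w = w ⬝ᵥ A *ᵥ v := by
  have hT : Aᵀ = A := by simpa using hA.1.eq
  rw [dotProduct_mulVec, ← mulVec_transpose, hT, dotProduct_comm]

lemma nonneg_of_forall_small_add_mul (c b : ℝ)
    (H : ∀ t : ℝ, 0 < t → t ≤ 1 → 0 ≤ c + t * b) : 0 ≤ c := by
  have hlim : Filter.Tendsto (fun t : ℝ => c + t * b) (nhdsWithin 0 (Set.Ioi 0)) (nhds c) := by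
    have hc : Continuous fun t : ℝ => c + t * b := by fun_prop
    simpa using (hc.tendsto 0).mono_left nhdsWithin_le_nhds
  refine ge_of_tendsto hlim ?_
  filter_upwards [Ioc_mem_nhdsGT (zero_lt_one (α := ℝ))] with t ht
  exact H t ht.1 ht.2

/-- **ε-subdifferential of the nonsmooth part at an inexact proximal mapping.**
Let `f` be convex differentiable (with gradient `f'`), `h` proper convex
(extended-real valued), and let `Φ̄ₓ(y) = f(x) + ∇f(x)ᵀ(y−x) + (1/2)‖y−x‖² + h(y)`
(seminorm induced by a symmetric psd matrix `A` with Moore–Penrose pseudoinverse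
`Ap`).  If `pₓ` minimizes `Φ̄ₓ` and `Φ̄ₓ(qₓ) ≤ Φ̄ₓ(pₓ) + ε` with `ε ≥ 0`, then
there is `s` with `sᵀA⁺s ≤ 2ε` and `−s − ∇f̄ₓ(qₓ) ∈ ∂_ε h(qₓ)`, where
`∇f̄ₓ(qₓ) = ∇f(x) + A(qₓ − x)`. -/
theorem eps_subdifferential_of_inexact_proximal
    {n : ℕ} (A Ap : Matrix (Fin n) (Fin n) ℝ) (hA : A.PosSemidef)
    (hAp1 : A * Ap * A = A) (hAp2 : Ap * A * Ap = Ap)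
    (hAp3 : (A * Ap)ᵀ = A * Ap) (hAp4 : (Ap * A)ᵀ = Ap * A)
    (f : (Fin n → ℝ) → ℝ) (f' : (Fin n → ℝ) → (Fin n → ℝ))
    (hconv : ∀ a b, f a + f' a ⬝ᵥ (b - a) ≤ f b)
    (h : (Fin n → ℝ) → EReal)
    (hproper : ∃ w, h w ≠ ⊤) (hnotbot : ∀ w, h w ≠ ⊥)
    (hhconv : ∀ (a b : Fin n → ℝ) (t : ℝ), 0 ≤ t → t ≤ 1 →
      h (t • a + (1 - t) • b) ≤ (t : EReal) * h a + ((1 - t : ℝ) : EReal) * h b)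
    (x px qx : Fin n → ℝ) (ε : ℝ) (hε : 0 ≤ ε)
    (Φbar : (Fin n → ℝ) → EReal)
    (hΦbar : ∀ y, Φbar y =
      ((f x + f' x ⬝ᵥ (y - x)
        + (1/2) * ((y - x) ⬝ᵥ A.mulVec (y - x)) : ℝ) : EReal) + h y)
    (hpx : ∀ w, Φbar px ≤ Φbar w)
    (hqx : Φbar qx ≤ Φbar px + (ε : EReal)) :
    ∃ s : Fin n → ℝ, s ⬝ᵥ Ap.mulVec s ≤ 2 * ε ∧
      ∀ u : Fin n → ℝ,
        h qx + (((-s - (f' x + A.mulVec (qx - x))) ⬝ᵥ (u - qx) - ε : ℝ) : EReal) ≤ h u := by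
  have hsymm : ∀ v w : Fin n → ℝ, v ⬝ᵥ A *ᵥ w = w ⬝ᵥ A *ᵥ v :=
    dotProduct_mulVec_symm hA
  have hreal : ∀ w, h w ≠ ⊤ → ∃ r : ℝ, h w = (r : EReal) := fun w hw =>
    ⟨(h w).toReal, (EReal.coe_toReal hw (hnotbot w)).symm⟩
  -- Comparing with a point of the domain shows that `h` is finite at `px`, hence at `qx`.
  obtain ⟨w₀, hw₀⟩ := hproper
  obtain ⟨r₀, hr₀⟩ := hreal w₀ hw₀
  have hptop : h px ≠ ⊤ := by
    intro htop
    have h1 := hpx w₀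
    rw [hΦbar px, hΦbar w₀, htop, hr₀, EReal.coe_add_top, ← EReal.coe_add, top_le_iff] at h1
    exact EReal.coe_ne_top _ h1
  obtain ⟨rp, hrp⟩ := hreal px hptop
  have hqtop : h qx ≠ ⊤ := by
    intro htop
    rw [hΦbar px, hΦbar qx, htop, hrp, EReal.coe_add_top, ← EReal.coe_add, ← EReal.coe_add,
      top_le_iff] at hqx
    exact EReal.coe_ne_top _ hqx
  obtain ⟨rq, hrq⟩ := hreal qx hqtop
  -- First-order optimality: `-∇f(x) - A(px - x)` is an exact subgradient of `h` at `px`.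
  have hopt : ∀ (u : Fin n → ℝ) (ru : ℝ), h u = (ru : EReal) →
      0 ≤ ru - rp + f' x ⬝ᵥ (u - px) + (u - px) ⬝ᵥ A *ᵥ (px - x) := by
    intro u ru hru
    refine nonneg_of_forall_small_add_mul _ (1 / 2 * ((u - px) ⬝ᵥ A *ᵥ (u - px))) ?_
    intro t ht0 ht1
    have h1 := hpx (t • u + (1 - t) • px)
    have h2 := hhconv u px t ht0.le ht1
    rw [hru, hrp, ← EReal.coe_mul, ← EReal.coe_mul, ← EReal.coe_add] at h2
    obtain ⟨rt, hrt⟩ := hreal (t • u + (1 - t) • px)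
      (ne_top_of_le_ne_top (EReal.coe_ne_top _) h2)
    rw [hrt, EReal.coe_le_coe_iff] at h2
    rw [hΦbar, hΦbar, hrt, hrp, ← EReal.coe_add, ← EReal.coe_add, EReal.coe_le_coe_iff] at h1
    have e : t • u + (1 - t) • px - x = (px - x) + t • (u - px) := by
      ext i
      simp only [Pi.sub_apply, Pi.add_apply, Pi.smul_apply, smul_eq_mul]
      ring
    rw [e] at h1
    simp only [mulVec_add, mulVec_smul, dotProduct_add, add_dotProduct, dotProduct_smul,
      smul_dotProduct, smul_eq_mul] at h1
    rw [hsymm (px - x) (u - px)] at h1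
    have h3 : 0 ≤ t * (ru - rp + f' x ⬝ᵥ (u - px) + (u - px) ⬝ᵥ A *ᵥ (px - x)
        + t * (1 / 2 * ((u - px) ⬝ᵥ A *ᵥ (u - px)))) := by
      linarith
    exact nonneg_of_mul_nonneg_right h3 ht0
  rw [hΦbar, hΦbar, hrq, hrp, ← EReal.coe_add, ← EReal.coe_add, ← EReal.coe_add,
    EReal.coe_le_coe_iff] at hqx
  have hq := hopt qx rq hrq
  have eq1 : qx - x = (px - x) + (qx - px) := by abel
  rw [eq1] at hqx
  simp only [mulVec_add, dotProduct_add, add_dotProduct] at hqx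
  rw [hsymm (px - x) (qx - px)] at hqx
  refine ⟨A *ᵥ (px - qx), ?_, ?_⟩
  · have e : (A *ᵥ (px - qx)) ⬝ᵥ Ap *ᵥ (A *ᵥ (px - qx))
        = (qx - px) ⬝ᵥ A *ᵥ (qx - px) := by
      rw [dotProduct_comm, hsymm, mulVec_mulVec, mulVec_mulVec, hAp1,
        ← neg_sub qx px, mulVec_neg, neg_dotProduct_neg]
    rw [e]
    linarith
  · intro u
    by_cases hu : h u = ⊤
    · rw [hu]
      exact le_top
    obtain ⟨ru, hru⟩ := hreal u hu
    have h1 := hopt u ru hru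
    have hpos : 0 ≤ (qx - px) ⬝ᵥ A *ᵥ (qx - px) := by
      simpa using hA.dotProduct_mulVec_nonneg (qx - px)
    rw [hru, hrq, ← EReal.coe_add, EReal.coe_le_coe_iff]
    have e : -(A *ᵥ (px - qx)) - (f' x + A *ᵥ (qx - x)) = -(f' x) - A *ᵥ (px - x) := by
      have e' : px - x = (px - qx) + (qx - x) := by abel
      rw [e', mulVec_add]
      abel
    have eu : u - qx = (u - px) - (qx - px) := by abel
    rw [e, eu]
    simp only [sub_dotProduct, neg_dotProduct, dotProduct_sub (f' x), dotProduct_sub (A *ᵥ _),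
      dotProduct_comm (A *ᵥ _)] at h1 hqx hpos ⊢
    linarith
end

section
/- Inexact gradient lemma: let f: ℝⁿ → ℝ be convex differentiable, 1-smooth and (1/κ)-strongly convex w.r.t. ‖·‖ (κ ≥ 1), h: ℝⁿ → ℝ∪{+∞} proper convex, Φ = f + h, and suppose p_x minimizes Φ̄_x and q_x satisfies Φ̄_x(q_x) ≤ Φ̄_x(p_x) + ε with ε ≥ 0. Set d_x := A(x − q_x). Then for every u ∈ ℝⁿ: Φ(u) ≥ Φ(q_x) + d_xᵀ(u − x) + (1/(2κ))‖u − x‖² + (1/2)‖d_x‖_*² − √(2ε)·‖u − q_x‖ − ε. -/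
/-!
By strong convexity of `f` on the side of `u` and smoothness on the side of `qₓ`, the claim reduces,
with `F y = ∇f(x)ᵀ y + h y`, to
`F(u) ≥ F(qₓ) + dₓᵀ(u − qₓ) − √(2ε)‖u − qₓ‖ − ε`
(here `‖dₓ‖²⋆ = ‖x − qₓ‖²`, because `A A⁺ A = A`).

Since `qₓ` is `ε`-optimal for the model, comparing it with `qₓ + t(u − qₓ)`, `0 < t ≤ 1`, and using
convexity of `h` gives `t Δ + (t²/2)‖u − qₓ‖² ≥ −ε`, where `Δ = F(u) − F(qₓ) − dₓᵀ(u − qₓ)`.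
Optimizing over `t` (`le_of_forall_step`) yields the bound: `t = √(2ε)/‖u − qₓ‖` if this is at
most `1`, else `t = 1`, and `t → 0` when `ε = 0`.
-/

open Matrix Finset

/-- Optimization over the step length `t` along a segment. -/
lemma le_of_forall_step (Δ D ε : ℝ) (hD : 0 ≤ D) (hε : 0 ≤ ε)
    (H : ∀ t : ℝ, 0 < t → t ≤ 1 → -ε ≤ t * Δ + t ^ 2 / 2 * D ^ 2) :
    -(Real.sqrt (2 * ε) * D) - ε ≤ Δ := by
  set s := Real.sqrt (2 * ε) with hs
  have hs0 : 0 ≤ s := Real.sqrt_nonneg _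
  have hs2 : s ^ 2 = 2 * ε := Real.sq_sqrt (by linarith)
  rcases hε.eq_or_lt with h0 | hpos
  · have hsz : s = 0 := by rw [hs, ← h0]; simp
    rw [hsz, ← h0]
    by_contra hc
    have hΔ : Δ < 0 := by linarith
    have hden : 0 < D ^ 2 - Δ := by nlinarith [sq_nonneg D]
    -- a step small enough for the quadratic term not to compensate the negative slope `Δ`
    have ht : 0 < -Δ / (D ^ 2 - Δ) := div_pos (by linarith) hden
    have h1 := H _ ht ((div_le_one hden).2 (by nlinarith [sq_nonneg D]))
    set t := -Δ / (D ^ 2 - Δ) with htd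
    have hte : t * (D ^ 2 - Δ) = -Δ := div_mul_cancel₀ _ hden.ne'
    have h2 : 0 ≤ t * (Δ + t / 2 * D ^ 2) := by nlinarith
    have h3 := nonneg_of_mul_nonneg_right h2 ht
    nlinarith [mul_pos ht (neg_pos.2 hΔ)]
  · have hspos : 0 < s := Real.sqrt_pos.2 (by linarith)
    by_cases hsD : s ≤ D
    · have hDpos : 0 < D := hspos.trans_le hsD
      have ht : 0 < s / D := div_pos hspos hDpos
      have h1 := H _ ht ((div_le_one hDpos).2 hsD)
      set t := s / D with htd
      have hte : t * D = s := div_mul_cancel₀ _ hDpos.ne'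
      have h2 : 0 ≤ t * (Δ + s * D) := by nlinarith
      have h3 := nonneg_of_mul_nonneg_right h2 ht
      linarith
    · have h1 := H 1 one_pos le_rfl
      push Not at hsD
      nlinarith

/-- For symmetric `A`, the squared dual seminorm of `A v` equals the squared seminorm of `v`. -/
lemma dual_sq_mulVec {n : ℕ} (A Ap : Matrix (Fin n) (Fin n) ℝ) (hA : Aᵀ = A)
    (hAp1 : A * Ap * A = A) (v : Fin n → ℝ) :
    A.mulVec v ⬝ᵥ Ap.mulVec (A.mulVec v) = v ⬝ᵥ A.mulVec v := by
  calc A.mulVec v ⬝ᵥ Ap.mulVec (A.mulVec v)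
      = v ⬝ᵥ A.mulVec (Ap.mulVec (A.mulVec v)) := by
        rw [Matrix.dotProduct_mulVec v A, ← Matrix.mulVec_transpose, hA]
    _ = v ⬝ᵥ (A * Ap * A).mulVec v := by simp [Matrix.mulVec_mulVec, Matrix.mul_assoc]
    _ = v ⬝ᵥ A.mulVec v := by rw [hAp1]

/-- **Inexact gradient lemma.**  Let `f` be convex differentiable, 1-smooth and
`(1/κ)`-strongly convex w.r.t. the seminorm induced by a symmetric psd matrix `A`
(`κ ≥ 1`, dual seminorm via the Moore–Penrose pseudoinverse `Ap`), `h` proper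
convex, `Φ = f + h`.  If `pₓ` minimizes the model `Φ̄ₓ` and `Φ̄ₓ(qₓ) ≤ Φ̄ₓ(pₓ) + ε`
with `ε ≥ 0`, then with `dₓ = A(x − qₓ)`, for every `u`:
`Φ(u) ≥ Φ(qₓ) + dₓᵀ(u−x) + (1/(2κ))‖u−x‖² + (1/2)‖dₓ‖²⋆ − √(2ε)·‖u−qₓ‖ − ε`. -/
theorem inexact_gradient_lemma
    {n : ℕ} (A Ap : Matrix (Fin n) (Fin n) ℝ) (hA : A.PosSemidef)
    (hAp1 : A * Ap * A = A) (hAp2 : Ap * A * Ap = Ap)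
    (hAp3 : (A * Ap)ᵀ = A * Ap) (hAp4 : (Ap * A)ᵀ = Ap * A)
    (κ : ℝ) (hκ : 1 ≤ κ)
    (f : (Fin n → ℝ) → ℝ) (f' : (Fin n → ℝ) → (Fin n → ℝ))
    (hsmooth : ∀ a b,
      f b ≤ f a + f' a ⬝ᵥ (b - a) + (1/2) * ((b - a) ⬝ᵥ A.mulVec (b - a)))
    (hsconv : ∀ a b,
      f a + f' a ⬝ᵥ (b - a) + (1/(2*κ)) * ((b - a) ⬝ᵥ A.mulVec (b - a)) ≤ f b)
    (h : (Fin n → ℝ) → EReal)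
    (hproper : ∃ w, h w ≠ ⊤) (hnotbot : ∀ w, h w ≠ ⊥)
    (hhconv : ∀ (a b : Fin n → ℝ) (t : ℝ), 0 ≤ t → t ≤ 1 →
      h (t • a + (1 - t) • b) ≤ (t : EReal) * h a + ((1 - t : ℝ) : EReal) * h b)
    (Φ : (Fin n → ℝ) → EReal) (hΦ : ∀ w, Φ w = (f w : EReal) + h w)
    (x px qx : Fin n → ℝ) (ε : ℝ) (hε : 0 ≤ ε)
    (Φbar : (Fin n → ℝ) → EReal)
    (hΦbar : ∀ y, Φbar y =
      ((f x + f' x ⬝ᵥ (y - x)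
        + (1/2) * ((y - x) ⬝ᵥ A.mulVec (y - x)) : ℝ) : EReal) + h y)
    (hpx : ∀ w, Φbar px ≤ Φbar w)
    (hqx : Φbar qx ≤ Φbar px + (ε : EReal))
    (dx : Fin n → ℝ) (hdx : dx = A.mulVec (x - qx)) :
    ∀ u : Fin n → ℝ,
      Φ qx + ((dx ⬝ᵥ (u - x)
          + (1/(2*κ)) * ((u - x) ⬝ᵥ A.mulVec (u - x))
          + (1/2) * (dx ⬝ᵥ Ap.mulVec dx)
          - Real.sqrt (2*ε) * matSeminorm A (u - qx) - ε : ℝ) : EReal) ≤ Φ u := by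
  intro u
  have hsymm : Aᵀ = A := by simpa using hA.isHermitian.eq
  have hcomm : ∀ v w : Fin n → ℝ, v ⬝ᵥ A.mulVec w = w ⬝ᵥ A.mulVec v := by
    intro v w
    rw [Matrix.dotProduct_mulVec, ← Matrix.mulVec_transpose, hsymm, dotProduct_comm]
  have hnn : 0 ≤ (u - qx) ⬝ᵥ A.mulVec (u - qx) := by
    simpa using hA.dotProduct_mulVec_nonneg (u - qx)
  rw [hΦ, hΦ]
  by_cases hu : h u = ⊤
  · simp [hu]
  obtain ⟨a, ha⟩ : ∃ a : ℝ, h u = a := ⟨_, (EReal.coe_toReal hu (hnotbot u)).symm⟩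
  have hopt : ∀ w, Φbar qx ≤ Φbar w + (ε : EReal) := fun w =>
    hqx.trans (add_le_add_left (hpx w) _)
  have hq : h qx ≠ ⊤ := by
    intro hq
    have := hopt u
    rw [hΦbar, hΦbar, hq, ha, EReal.coe_add_top, top_le_iff] at this
    norm_cast at this
    exact EReal.coe_ne_top _ this
  obtain ⟨b, hb⟩ : ∃ b : ℝ, h qx = b := ⟨_, (EReal.coe_toReal hq (hnotbot qx)).symm⟩
  set v := u - qx with hv
  set z := qx - x with hz
  have hux : u - x = v + z := by rw [hv, hz]; abel
  have hdz : dx = -A.mulVec z := by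
    rw [hdx, ← Matrix.mulVec_neg]; congr 1; rw [hz]; abel
  have hstep : ∀ t : ℝ, 0 < t → t ≤ 1 →
      -ε ≤ t * (f' x ⬝ᵥ v + a - b + v ⬝ᵥ A.mulVec z) +
        t ^ 2 / 2 * (matSeminorm A v) ^ 2 := by
    intro t ht0 ht1
    have hc := hhconv u qx t ht0.le ht1
    have ho := hopt (t • u + (1 - t) • qx)
    have hy : t • u + (1 - t) • qx - x = z + t • v := by
      rw [hv, hz]; module
    rw [ha, hb] at hc
    norm_cast at hc
    obtain ⟨c, hcc⟩ : ∃ c : ℝ, h (t • u + (1 - t) • qx) = c :=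
      ⟨_, (EReal.coe_toReal (hc.trans_lt (EReal.coe_lt_top _)).ne (hnotbot _)).symm⟩
    rw [hcc] at hc
    rw [hΦbar, hΦbar, hcc, hb, hy] at ho
    norm_cast at hc ho
    rw [matSeminorm, Real.sq_sqrt hnn]
    simp only [Matrix.mulVec_add, Matrix.mulVec_smul, dotProduct_add, add_dotProduct,
      dotProduct_smul, smul_dotProduct, smul_eq_mul] at ho
    rw [hcomm z v] at ho
    linarith
  have key := le_of_forall_step _ (ε := ε) (D := matSeminorm A v) (Real.sqrt_nonneg _) hε hstep
  have h1 := hsmooth x qx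
  rw [← hz] at h1
  have h2 := hsconv x u
  have hdual : dx ⬝ᵥ Ap.mulVec dx = z ⬝ᵥ A.mulVec z := by
    rw [hdz, ← Matrix.mulVec_neg, dual_sq_mulVec A Ap hsymm hAp1]
    simp [Matrix.mulVec_neg]
  have hdux : dx ⬝ᵥ (u - x) = -(v ⬝ᵥ A.mulVec z) - z ⬝ᵥ A.mulVec z := by
    rw [hdz, hux, dotProduct_comm]
    simp only [add_dotProduct, dotProduct_neg]
    ring
  have hfux : f' x ⬝ᵥ (u - x) = f' x ⬝ᵥ v + f' x ⬝ᵥ z := by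
    rw [hux, dotProduct_add]
  rw [ha, hb, hdual, hdux]
  norm_cast
  linarith
end

section
/- Recursive sequence bound (Lemma 1 of Schmidt–Roux–Bach): let {u_k}_{k≥0} be a sequence of nonnegative reals, {S_k} a nondecreasing sequence of nonnegative reals, and λ_i ≥ 0 for all i ≥ 1, such that for all k ≥ 0: u_k² ≤ S_k + Σ_{i=1}^{k} λ_i u_i. Then for all k ≥ 1: u_k ≤ (1/2)·Σ_{i=1}^{k} λ_i + √( S_k + ((1/2)·Σ_{i=1}^{k} λ_i)² ). -/
open Finset

/-! Let `u m` be the largest of `u 1, …, u k` and put `A = ∑ i ∈ Icc 1 k, lam i`. Monotonicity of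
`S` and nonnegativity of the weights turn the recursion at `m` into the quadratic inequality
`(u m)^2 ≤ S k + A * u m`. Completing the square bounds `u m`, and hence `u k`, by its larger
root. -/

/-- **Recursive sequence bound (Lemma 1 of Schmidt–Roux–Bach).**
If nonnegative reals `u_k` satisfy `u_k² ≤ S_k + Σ_{i=1}^k λ_i u_i` with `{S_k}`
nondecreasing nonnegative and `λ_i ≥ 0`, then for every `k ≥ 1`,
`u_k ≤ (1/2)Σ_{i=1}^k λ_i + √(S_k + ((1/2)Σ_{i=1}^k λ_i)²)`. -/
theorem recursive_sequence_bound
    (u S lam : ℕ → ℝ)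
    (hu : ∀ k, 0 ≤ u k)
    (hS : Monotone S) (hS0 : ∀ k, 0 ≤ S k)
    (hlam : ∀ i, 1 ≤ i → 0 ≤ lam i)
    (hrec : ∀ k, (u k)^2 ≤ S k + ∑ i ∈ Finset.Icc 1 k, lam i * u i) :
    ∀ k, 1 ≤ k →
      u k ≤ (1/2) * ∑ i ∈ Finset.Icc 1 k, lam i
        + Real.sqrt (S k + ((1/2) * ∑ i ∈ Finset.Icc 1 k, lam i)^2) := by
  intro k hk
  obtain ⟨m, hm, hmax⟩ := Finset.exists_max_image (Finset.Icc 1 k) u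
    ⟨k, Finset.mem_Icc.2 ⟨hk, le_rfl⟩⟩
  have hmk : m ≤ k := (Finset.mem_Icc.1 hm).2
  have hsum : ∑ i ∈ Finset.Icc 1 m, lam i * u i ≤ (∑ i ∈ Finset.Icc 1 k, lam i) * u m := by
    rw [Finset.sum_mul]
    calc ∑ i ∈ Finset.Icc 1 m, lam i * u i
        ≤ ∑ i ∈ Finset.Icc 1 k, lam i * u i :=
          Finset.sum_le_sum_of_subset_of_nonneg (Finset.Icc_subset_Icc_right hmk)
            fun i hi _ => mul_nonneg (hlam i (Finset.mem_Icc.1 hi).1) (hu i)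
      _ ≤ ∑ i ∈ Finset.Icc 1 k, lam i * u m :=
          Finset.sum_le_sum fun i hi =>
            mul_le_mul_of_nonneg_left (hmax i hi) (hlam i (Finset.mem_Icc.1 hi).1)
  have hkm : u k ≤ u m := hmax k (Finset.mem_Icc.2 ⟨hk, le_rfl⟩)
  have hquad := hrec m
  have hSmk := hS hmk
  have hroot : u m - (1/2) * ∑ i ∈ Finset.Icc 1 k, lam i
      ≤ Real.sqrt (S k + ((1/2) * ∑ i ∈ Finset.Icc 1 k, lam i)^2) :=
    Real.le_sqrt_of_sq_le (by linarith)
  linarith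
end

section
/- VWF rounding inequality, positive breakpoint case: let l ≤ 0, r > 0, d > 0, and let r̄ satisfy r ≤ r̄ ≤ 1.1·r; set d̄ = d·r/r̄. Then for all x ≥ l: d·B_{l,r}(x) ≥ d̄·B_{l,r̄}(x) ≥ 2d·B_{l,r}(x/2). -/
/-! Clearing the denominator in `dbar = d * r / rbar` and dividing by `d`, the two claims become
`r * B_rbar(x) ≤ rbar * B_r(x)` and `2 * rbar * B_r(x/2) ≤ r * B_rbar(x)`. Both are checked on each
piece; on the piece `[r, rbar)`, respectively `[rbar, 2r)`, the two sides differ by a convex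
quadratic in `x`, and the sign of `(x - r) * (x - rbar)`, respectively `(x - rbar) * (x - 2r)`,
settles it. The upper bound on `rbar` enters as `rbar ≤ 2r`. -/

/-- The elementary VWF piece `B_{l,r} : [l,∞) → ℝ`:
if `r ≥ 0` it equals `x²/2` on `[l, r)` and `r·x − r²/2` on `[r, ∞)`;
if `r < 0` it equals `(x−r)²/2` on `[l, r)` and `0` on `[r, ∞)`.
(The parameter `l` only records the left endpoint of the domain.) -/
noncomputable def Blr (l r x : ℝ) : ℝ :=
  if 0 ≤ r then (if x < r then x^2/2 else r*x - r^2/2)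
  else (if x < r then (x - r)^2/2 else 0)

theorem Blr_rounding_upper (l r s x : ℝ) (hr : 0 < r) (h1 : r ≤ s) :
    r * Blr l s x ≤ s * Blr l r x := by
  have hs : 0 < s := hr.trans_le h1
  simp only [Blr, if_pos hr.le, if_pos hs.le]
  split_ifs with hxs hxr hxr
  · exact mul_le_mul_of_nonneg_right h1 (by positivity)
  · push Not at hxr
    have key : x ^ 2 ≤ 2 * s * x - s * r := by
      nlinarith [mul_nonneg (sub_nonneg.2 hxr) (sub_nonneg.2 hxs.le),
        mul_nonneg (sub_nonneg.2 h1) (hr.le.trans hxr)]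
    nlinarith [mul_le_mul_of_nonneg_left key hr.le]
  · linarith
  · nlinarith [mul_nonneg (mul_pos hr hs).le (sub_nonneg.2 h1)]

theorem Blr_rounding_lower (l r s x : ℝ) (hr : 0 < r) (h1 : r ≤ s) (h2 : s ≤ 2 * r) :
    2 * s * Blr l r (x / 2) ≤ r * Blr l s x := by
  have hs : 0 < s := hr.trans_le h1
  simp only [Blr, if_pos hr.le, if_pos hs.le]
  split_ifs with hxr hxs hxs
  · nlinarith [mul_nonneg (sub_nonneg.2 h2) (sq_nonneg x)]
  · push Not at hxs
    have key : x ^ 2 ≤ 4 * r * x - 2 * r * s := by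
      nlinarith [mul_nonneg (sub_nonneg.2 hxs) (by linarith : (0 : ℝ) ≤ 2 * r - x),
        mul_nonneg (sub_nonneg.2 h2) (hs.le.trans hxs)]
    nlinarith [mul_le_mul_of_nonneg_left key hs.le]
  · linarith
  · nlinarith [mul_nonneg (mul_pos hr hs).le (sub_nonneg.2 h2)]

/-- **VWF rounding inequality, positive breakpoint case.**
For `l ≤ 0`, `r > 0`, `d > 0`, `r ≤ r̄ ≤ 1.1·r` and `d̄ = d·r/r̄`:
`d·B_{l,r}(x) ≥ d̄·B_{l,r̄}(x) ≥ 2d·B_{l,r}(x/2)` for all `x ≥ l`. -/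
theorem vwf_rounding_pos
    (l r d rbar dbar : ℝ) (hl : l ≤ 0) (hr : 0 < r) (hd : 0 < d)
    (h1 : r ≤ rbar) (h2 : rbar ≤ 1.1 * r) (hdbar : dbar = d * r / rbar) :
    ∀ x, l ≤ x →
      dbar * Blr l rbar x ≤ d * Blr l r x ∧
      2 * d * Blr l r (x/2) ≤ dbar * Blr l rbar x := by
  intro x _
  have hs : 0 < rbar := hr.trans_le h1
  have e : dbar * Blr l rbar x = d * (r * Blr l rbar x) / rbar := by
    rw [hdbar]; ring
  rw [e, div_le_iff₀ hs, le_div_iff₀ hs]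
  have hu := mul_le_mul_of_nonneg_left (Blr_rounding_upper l r rbar x hr h1) hd.le
  have hlow := mul_le_mul_of_nonneg_left
    (Blr_rounding_lower l r rbar x hr h1 (by linarith)) hd.le
  constructor <;> linarith
end

section
/- VWF rounding inequality, negative breakpoint case: let l ≤ 0, r < 0 with l ≤ r, d > 0, and let r̄ satisfy 1.1·r ≤ r̄ ≤ r (so r̄ < 0 and l ≤ 1.1r ≤ r̄); set d̄ = d·r/r̄. Then for all x ≥ l: d·B_{l,r}(x) ≥ d̄·B_{l,r̄}(x) ≥ 2d·B_{l,r}(x/2). -/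
/-- A negative-breakpoint piece is a truncated square. -/
lemma Blr_of_neg {l r : ℝ} (hr : r < 0) (x : ℝ) : Blr l r x = (max (r - x) 0) ^ 2 / 2 := by
  unfold Blr
  rw [if_neg (not_le.mpr hr)]
  split_ifs with h
  · rw [max_eq_left (by linarith)]; ring
  · rw [max_eq_right (by linarith)]; ring

lemma Blr_mono_of_neg {l r s : ℝ} (hrs : r ≤ s) (hs : s < 0) (x : ℝ) :
    Blr l r x ≤ Blr l s x := by
  rw [Blr_of_neg (hrs.trans_lt hs), Blr_of_neg hs]
  gcongr

lemma Blr_nonneg_of_neg {l r : ℝ} (hr : r < 0) (x : ℝ) : 0 ≤ Blr l r x := by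
  rw [Blr_of_neg hr]
  positivity

/-- Scaling of the truncated square: halving the argument doubles the breakpoint. -/
lemma Blr_half_of_neg {l r : ℝ} (hr : r < 0) (x : ℝ) :
    Blr l r (x / 2) = Blr l (2 * r) x / 4 := by
  have hmax : max (2 * r - x) 0 = 2 * max (r - x / 2) 0 := by
    rw [mul_max_of_nonneg _ _ (by norm_num : (0 : ℝ) ≤ 2)]
    congr 1 <;> ring
  rw [Blr_of_neg hr, Blr_of_neg (by linarith : 2 * r < 0), hmax]
  ring

/-- **VWF rounding inequality, negative breakpoint case.**
For `l ≤ 0`, `r < 0` with `l ≤ r`, `d > 0`, `1.1·r ≤ r̄ ≤ r` and `d̄ = d·r/r̄`: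
`d·B_{l,r}(x) ≥ d̄·B_{l,r̄}(x) ≥ 2d·B_{l,r}(x/2)` for all `x ≥ l`. -/
theorem vwf_rounding_neg
    (l r d rbar dbar : ℝ) (hl : l ≤ 0) (hr : r < 0) (hlr : l ≤ r) (hd : 0 < d)
    (h1 : 1.1 * r ≤ rbar) (h2 : rbar ≤ r) (hdbar : dbar = d * r / rbar) :
    ∀ x, l ≤ x →
      dbar * Blr l rbar x ≤ d * Blr l r x ∧
      2 * d * Blr l r (x/2) ≤ dbar * Blr l rbar x := by
  intro x _
  have hrbar : rbar < 0 := h2.trans_lt hr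
  have hc1 : r / rbar ≤ 1 := by
    rw [div_le_one_of_neg hrbar]; exact h2
  have hc2 : 1 / 2 ≤ r / rbar := by
    rw [le_div_iff_of_neg hrbar]; linarith
  have hnn := Blr_nonneg_of_neg (l := l) hrbar x
  rw [hdbar, mul_div_assoc, Blr_half_of_neg hr]
  constructor
  · rw [mul_assoc]
    refine mul_le_mul_of_nonneg_left ?_ hd.le
    exact (mul_le_of_le_one_left hnn hc1).trans (Blr_mono_of_neg h2 hr x)
  · have hmono : Blr l (2 * r) x ≤ Blr l rbar x := Blr_mono_of_neg (by linarith) hrbar x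
    have hscale := mul_le_mul_of_nonneg_right hc2 hnn
    calc 2 * d * (Blr l (2 * r) x / 4) = d * (1 / 2 * Blr l (2 * r) x) := by ring
      _ ≤ d * (r / rbar * Blr l rbar x) := mul_le_mul_of_nonneg_left (by linarith) hd.le
      _ = d * (r / rbar) * Blr l rbar x := by ring
end

section
/- Bregman divergence decomposition of a piecewise quadratic convex function: let k ≥ 1, let s₀ ≤ 0 and s₀ < s₁ < ··· < s_{k−1} < s_k = ∞, and let f: [s₀, ∞) → ℝ be continuous with f(x) = (1/2)r_i x² + a_i x + b_i on [s_i, s_{i+1}) for 0 ≤ i ≤ k−1, such that f′ is continuous on (s₀,∞), the sequence r₀ ≥ r₁ ≥ ··· ≥ r_{k−1} is nonincreasing, and r_{k−1} = 0 (f′ is constant on the last piece). Set d_i := r_i − r_{i+1} ≥ 0 for 0 ≤ i ≤ k−2, and let B_f(x) := f(x) − f(0) − f′(0)·x. Then for all x ∈ [s₀, ∞): B_f(x) = Σ_{i=0}^{k−2} d_i · D_{s₀, s_{i+1}}(x), where D_{l,r}(x) = ∫₀ˣ ∫₀ᵘ χ_{(l,r)}(v) dv du. -/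
/-!
Write `P_t(x) = ((t - x)⁺)² / 2` and `Q_i(x) = r_i x² / 2 + a_i x + b_i`. Differentiability of `f`
at the split point `s_{i+1}` forces `Q_i` and `Q_{i+1}` to agree there to first order, so
`Q_i(x) - Q_{i+1}(x) = (r_i - r_{i+1}) (x - s_{i+1})² / 2` (`piece_sub_piece`). Telescoping, and
using that `P_t` vanishes on `[t, ∞)`, gives `f = Q_{k-1} + ∑ (r_i - r_{i+1}) P_{s_{i+1}}` on
`[s₀, ∞)`, where `Q_{k-1}` is affine. Taking Bregman divergences around `0` kills the affine part,
and the divergence of `P_t` is exactly `D_{s₀, t}` (`Dlr_eq`).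
-/

open Finset

/-- The double integral `D_{l,r}(x) = ∫₀ˣ ∫₀ᵘ χ_{(l,r)}(v) dv du` (iterated signed
interval integrals of the indicator of the open interval `(l,r)`). -/
noncomputable def Dlr (l r : ℝ) : ℝ → ℝ := fun x =>
  ∫ u in (0:ℝ)..x, ∫ v in (0:ℝ)..u, Set.indicator (Set.Ioo l r) (fun _ => (1:ℝ)) v

/-- The truncated quadratic `((t - x)⁺)² / 2`, whose second derivative is the indicator
of `(-∞, t)`. -/
noncomputable def truncSq (t x : ℝ) : ℝ := (max (t - x) 0) ^ 2 / 2

lemma hasDerivAt_truncSq (t x : ℝ) : HasDerivAt (truncSq t) (-max (t - x) 0) x := by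
  have hquad : ∀ y, HasDerivAt (fun z : ℝ => (t - z) ^ 2 / 2) (-(t - y)) y := fun y => by
    have h := (((hasDerivAt_id y).const_sub t).pow 2).div_const 2
    refine h.congr_deriv ?_
    simp
    ring
  have hleft : ∀ y ∈ Set.Iic t, truncSq t y = (t - y) ^ 2 / 2 := fun y hy => by
    have hy' : y ≤ t := hy
    rw [truncSq, max_eq_left (by linarith)]
  have hright : ∀ y ∈ Set.Ici t, truncSq t y = 0 := fun y hy => by
    have hy' : t ≤ y := hy
    rw [truncSq, max_eq_right (by linarith)]; norm_num
  rcases lt_trichotomy x t with h | h | h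
  · rw [max_eq_left (by linarith)]
    refine (hquad x).congr_of_eventuallyEq ?_
    filter_upwards [Iic_mem_nhds h] with y hy using hleft y hy
  · subst h
    have h1 : HasDerivWithinAt (truncSq x) 0 (Set.Iic x) x :=
      ((hquad x).congr_deriv (by simp)).hasDerivWithinAt.congr hleft (hleft x Set.self_mem_Iic)
    have h2 : HasDerivWithinAt (truncSq x) 0 (Set.Ici x) x :=
      (hasDerivWithinAt_const x _ (0 : ℝ)).congr hright (hright x Set.self_mem_Ici)
    have h3 := h1.union h2
    rw [Set.Iic_union_Ici, hasDerivWithinAt_univ] at h3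
    simpa using h3
  · rw [max_eq_right (by linarith), neg_zero]
    refine (hasDerivAt_const x (0 : ℝ)).congr_of_eventuallyEq ?_
    filter_upwards [Ici_mem_nhds h] with y hy using hright y hy

lemma integral_indicator_Ioo {l t u : ℝ} (hl : l ≤ 0) (hu : l ≤ u) :
    ∫ v in (0:ℝ)..u, Set.indicator (Set.Ioo l t) (fun _ => (1:ℝ)) v
      = -max (t - u) 0 + max t 0 := by
  have key := intervalIntegral.integral_eq_sub_of_hasDeriv_right (a := 0) (b := u)
    (f := fun v => -max (t - v) 0) (f' := Set.indicator (Set.Ioo l t) (fun _ => (1:ℝ)))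
    (by fun_prop) ?_ ?_
  · rw [key]; simp
  · intro v hv
    have hlv : l < v := lt_of_le_of_lt (le_min hl hu) hv.1
    rcases lt_or_ge v t with h | h
    · rw [Set.indicator_of_mem (show v ∈ Set.Ioo l t from ⟨hlv, h⟩)]
      have h1 : HasDerivAt (fun z : ℝ => -(t - z)) 1 v := by
        exact ((hasDerivAt_id v).const_sub t).neg.congr_deriv (neg_neg 1)
      refine (h1.congr_of_eventuallyEq ?_).hasDerivWithinAt
      filter_upwards [Iic_mem_nhds h] with y hy
      have hy' : y ≤ t := hy
      rw [max_eq_left (by linarith)]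
    · rw [Set.indicator_of_notMem (fun hm => absurd hm.2 (not_lt.mpr h))]
      have hz : ∀ y, v ≤ y → -max (t - y) 0 = 0 := fun y hy => by
        rw [max_eq_right (by linarith), neg_zero]
      exact (hasDerivWithinAt_const v _ (0 : ℝ)).congr
        (fun y hy => hz y (le_of_lt hy)) (hz v le_rfl)
  · exact ⟨(MeasureTheory.integrableOn_const (by simp)).indicator measurableSet_Ioo,
      (MeasureTheory.integrableOn_const (by simp)).indicator measurableSet_Ioo⟩

/-- On `[l, ∞)`, `D_{l,t}` is the Bregman divergence of `truncSq t` around `0`. -/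
lemma Dlr_eq {l t x : ℝ} (hl : l ≤ 0) (hx : l ≤ x) :
    Dlr l t x = truncSq t x - truncSq t 0 + max t 0 * x := by
  have hcongr : Dlr l t x = ∫ u in (0:ℝ)..x, (-max (t - u) 0 + max t 0) := by
    refine intervalIntegral.integral_congr fun u hu => ?_
    exact integral_indicator_Ioo hl ((le_min hl hx).trans hu.1)
  rw [hcongr, intervalIntegral.integral_eq_sub_of_hasDerivAt
    (f := fun u => truncSq t u + max t 0 * u)]
  · simp; ring
  · intro u _
    exact ((hasDerivAt_truncSq t u).add
      ((hasDerivAt_id u).const_mul (max t 0))).congr_deriv (by simp)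
  · exact Continuous.intervalIntegrable (by fun_prop) _ _

lemma hasDerivAt_quad (r a b x : ℝ) :
    HasDerivAt (fun y : ℝ => (1/2) * r * y^2 + a * y + b) (r * x + a) x := by
  have h := ((((hasDerivAt_id x).pow 2).const_mul ((1/2) * r)).add
    ((hasDerivAt_id x).const_mul a)).add_const b
  refine h.congr_deriv ?_
  simp; ring

/-- If `f` agrees with a quadratic on a nondegenerate interval, then its derivative at each point of
that interval, endpoints included, is that of the quadratic. -/
lemma deriv_eq_of_eqOn_Icc {f : ℝ → ℝ} {c r a b p q x : ℝ} {S : Set ℝ} (hpq : p < q)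
    (hS : Set.Icc p q ⊆ S) (hx : x ∈ Set.Icc p q)
    (heq : ∀ y ∈ Set.Icc p q, f y = (1/2) * r * y^2 + a * y + b)
    (hf : HasDerivWithinAt f c S x) : c = r * x + a :=
  (uniqueDiffOn_Icc hpq x hx).eq_deriv _ (hf.mono hS)
    ((hasDerivAt_quad r a b x).hasDerivWithinAt.congr heq (heq x hx))

/-- Two quadratics that agree to first order at an interior split point `q` differ by a multiple
of `(x - q)²`. -/
lemma piece_sub_piece {f f' : ℝ → ℝ} {s₀ p q m r₁ a₁ b₁ r₂ a₂ b₂ : ℝ} (hp : s₀ ≤ p)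
    (hpq : p < q) (hqm : q < m)
    (h₁ : ∀ y, p ≤ y → y < q → f y = (1/2) * r₁ * y^2 + a₁ * y + b₁)
    (h₂ : ∀ y, q ≤ y → y ≤ m → f y = (1/2) * r₂ * y^2 + a₂ * y + b₂)
    (hcont : ContinuousOn f (Set.Ici s₀))
    (hderiv : ∀ x ∈ Set.Ici s₀, HasDerivWithinAt f (f' x) (Set.Ici s₀) x) (x : ℝ) :
    ((1/2) * r₁ * x^2 + a₁ * x + b₁) - ((1/2) * r₂ * x^2 + a₂ * x + b₂)
      = (r₁ - r₂) * ((x - q)^2 / 2) := by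
  have hsub : Set.Icc p q ⊆ Set.Ici s₀ := fun y hy => hp.trans hy.1
  -- continuity extends the left formula to the closed interval
  have hE : Set.EqOn f (fun y => (1/2) * r₁ * y^2 + a₁ * y + b₁) (Set.Icc p q) := by
    refine Set.EqOn.of_subset_closure (s := Set.Ico p q) (fun y hy => h₁ y hy.1 hy.2)
      (hcont.mono hsub) (by fun_prop) Set.Ico_subset_Icc_self ?_
    rw [closure_Ico hpq.ne]
  have hq := hderiv q (hp.trans hpq.le)
  have e₁ := deriv_eq_of_eqOn_Icc hpq hsub ⟨hpq.le, le_rfl⟩ (fun y hy => hE hy) hq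
  have e₂ := deriv_eq_of_eqOn_Icc hqm (fun y hy => (hp.trans hpq.le).trans hy.1)
    ⟨le_rfl, hqm.le⟩ (fun y hy => h₂ y hy.1 hy.2) hq
  have v₁ := hE (show q ∈ Set.Icc p q from ⟨hpq.le, le_rfl⟩)
  have v₂ := h₂ q le_rfl hqm.le
  simp only at v₁
  have ea : a₁ = r₂ * q + a₂ - r₁ * q := by linarith
  subst ea
  have eb : b₁ = (1/2) * r₂ * q^2 + a₂ * q + b₂ - (1/2) * r₁ * q^2
    - (r₂ * q + a₂ - r₁ * q) * q := by linarith
  subst eb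
  ring

/-- **Bregman divergence decomposition of a piecewise quadratic convex function.**
Let `f` be continuous on `[s₀,∞)`, equal to `(1/2)rᵢx² + aᵢx + bᵢ` on the piece
`[sᵢ, sᵢ₊₁)` (last piece `[s_{k−1}, ∞)`), with a (one-sided) derivative `f'` on
`[s₀,∞)` that is continuous on `(s₀,∞)`, with `r₀ ≥ r₁ ≥ ⋯ ≥ r_{k−1} = 0`.
Then the Bregman divergence `B_f(x) = f(x) − f(0) − f'(0)·x` satisfies
`B_f(x) = Σ_{i=0}^{k−2} (rᵢ − rᵢ₊₁)·D_{s₀, sᵢ₊₁}(x)` for all `x ≥ s₀`. -/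
theorem bregman_decomposition_piecewise_quadratic
    (k : ℕ) (hk : 1 ≤ k)
    (s r a b : ℕ → ℝ)
    (hs0 : s 0 ≤ 0)
    (hsinc : ∀ i, i + 1 < k → s i < s (i+1))
    (hrmono : ∀ i, i + 1 < k → r (i+1) ≤ r i)
    (hrlast : r (k-1) = 0)
    (f f' : ℝ → ℝ)
    (hpiece : ∀ i, i < k → ∀ x, s i ≤ x → (i + 1 < k → x < s (i+1)) →
      f x = (1/2) * r i * x^2 + a i * x + b i)
    (hcont : ContinuousOn f (Set.Ici (s 0)))
    (hderiv : ∀ x ∈ Set.Ici (s 0), HasDerivWithinAt f (f' x) (Set.Ici (s 0)) x)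
    (hf'cont : ContinuousOn f' (Set.Ioi (s 0))) :
    ∀ x, s 0 ≤ x →
      f x - f 0 - f' 0 * x
        = ∑ i ∈ Finset.range (k-1), (r i - r (i+1)) * Dlr (s 0) (s (i+1)) x := by
  have hmono : ∀ i j, i ≤ j → j < k → s i ≤ s j := by
    intro i j hij
    induction j, hij using Nat.le_induction with
    | base => intro _; exact le_rfl
    | succ j _ ih => intro hj; exact (ih (by omega)).trans (hsinc j hj).le
  have hstep : ∀ i, i + 1 < k → ∀ x,
      ((1/2) * r i * x^2 + a i * x + b i)
        - ((1/2) * r (i+1) * x^2 + a (i+1) * x + b (i+1))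
        = (r i - r (i+1)) * ((x - s (i+1))^2 / 2) := by
    intro i hi
    obtain ⟨m, hm, hm'⟩ : ∃ m, s (i+1) < m ∧ (i + 1 + 1 < k → m < s (i+1+1)) := by
      by_cases h : i + 1 + 1 < k
      · obtain ⟨m, h1, h2⟩ := exists_between (hsinc (i+1) h)
        exact ⟨m, h1, fun _ => h2⟩
      · exact ⟨s (i+1) + 1, by linarith, fun h' => absurd h' h⟩
    exact piece_sub_piece (hmono 0 i (Nat.zero_le _) (by omega)) (hsinc i hi) hm
      (fun y h1 h2 => hpiece i (by omega) y h1 fun _ => h2)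
      (fun y h1 h2 => hpiece (i+1) hi y h1 fun h => h2.trans_lt (hm' h)) hcont hderiv
  -- the global formula holds on `[s j, ∞)`, by descending induction on `j` from the last piece
  have hform : ∀ n j, j + n = k - 1 → ∀ x, s j ≤ x →
      f x = a (k-1) * x + b (k-1)
        + ∑ i ∈ Finset.range (k-1), (r i - r (i+1)) * truncSq (s (i+1)) x := by
    have hzero : ∀ i x, s (i+1) ≤ x → truncSq (s (i+1)) x = 0 := fun i x h => by
      rw [truncSq, max_eq_right (by linarith)]; norm_num
    have htel : ∀ x n j, j + n = k - 1 →
        (1/2) * r j * x^2 + a j * x + b j = a (k-1) * x + b (k-1)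
          + ∑ i ∈ Finset.Ico j (k-1), (r i - r (i+1)) * ((x - s (i+1))^2 / 2) := by
      intro x n
      induction n with
      | zero =>
        intro j hj
        obtain rfl : j = k - 1 := by omega
        simp [hrlast]
      | succ n ih =>
        intro j hj
        rw [Finset.sum_eq_sum_Ico_succ_bot (by omega)]
        linarith [ih (j+1) (by omega), hstep j (by omega) x]
    have hon : ∀ n j, j + n = k - 1 → ∀ x, s j ≤ x → (j + 1 < k → x < s (j+1)) →
        f x = a (k-1) * x + b (k-1)
          + ∑ i ∈ Finset.range (k-1), (r i - r (i+1)) * truncSq (s (i+1)) x := by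
      intro n j hj x h1 h2
      rw [hpiece j (by omega) x h1 h2, htel x n j hj, Finset.range_eq_Ico,
        ← Finset.sum_Ico_consecutive _ (Nat.zero_le j) (show j ≤ k - 1 by omega)]
      rw [Finset.sum_eq_zero (s := Finset.Ico 0 j), zero_add]
      -- on the `j`-th piece exactly the splits to its right contribute
      · congr 1
        refine Finset.sum_congr rfl fun i hi => ?_
        rw [Finset.mem_Ico] at hi
        have : x < s (i+1) := (h2 (by omega)).trans_le (hmono _ _ (by omega) (by omega))
        rw [truncSq, max_eq_left (by linarith)]
        ring
      · intro i hi
        rw [Finset.mem_Ico] at hi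
        rw [hzero i x ((hmono _ _ (by omega) (by omega)).trans h1), mul_zero]
    intro n
    induction n with
    | zero => intro j hj x hx; exact hon 0 j hj x hx fun h => by omega
    | succ n ih =>
      intro j hj x hx
      rcases lt_or_ge x (s (j+1)) with h | h
      · exact hon (n+1) j hj x hx fun _ => h
      · exact ih (j+1) (by omega) x h
  have hf := hform (k-1) 0 (by omega)
  have hd0 : f' 0 = a (k-1)
      + ∑ i ∈ Finset.range (k-1), (r i - r (i+1)) * (-max (s (i+1)) 0) := by
    refine (uniqueDiffOn_Ici (s 0) 0 hs0).eq_deriv _ (hderiv 0 hs0) ?_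
    refine HasDerivWithinAt.congr (HasDerivAt.hasDerivWithinAt ?_) hf (hf 0 hs0)
    refine HasDerivAt.add ?_ (HasDerivAt.fun_sum fun i _ => ?_)
    · simpa using ((hasDerivAt_id (0:ℝ)).const_mul (a (k-1))).add_const (b (k-1))
    · simpa using (hasDerivAt_truncSq (s (i+1)) 0).const_mul (r i - r (i+1))
  intro x hx
  have hsum : ∑ i ∈ Finset.range (k-1), (r i - r (i+1)) * Dlr (s 0) (s (i+1)) x
      = ∑ i ∈ Finset.range (k-1), (r i - r (i+1)) * truncSq (s (i+1)) x
        - ∑ i ∈ Finset.range (k-1), (r i - r (i+1)) * truncSq (s (i+1)) 0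
        - (∑ i ∈ Finset.range (k-1), (r i - r (i+1)) * (-max (s (i+1)) 0)) * x := by
    rw [Finset.sum_mul, ← Finset.sum_sub_distrib, ← Finset.sum_sub_distrib]
    refine Finset.sum_congr rfl fun i _ => ?_
    rw [Dlr_eq hs0 hx]; ring
  rw [hsum, hf x hx, hf 0 hs0, hd0]
  ring
end

section
/- Composition law for the lift operators on quadratic-piece parameters: for c > 0 define P_c: ℝ⁴ → ℝ⁴ on tuples (s, r, a, b) with r ≥ 0 by P_c(s, r, a, b) = ( ((c+r)/c)·s + a/c, c·r/(c+r), c·a/(c+r), b + a²/(2(c+r)) ). Then for all x > 0, y > 0 and all (s, r, a, b) with r ≥ 0: P_x(P_y(s, r, a, b)) = P_z(s, r, a, b) where z = x·y/(x+y). (Note P_y(s,r,a,b) again has nonnegative second coordinate, so the composition is well defined.) -/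
/-- The lift operator `P_c` on quadratic-piece parameters `(s, r, a, b)`:
`P_c(s,r,a,b) = (((c+r)/c)·s + a/c, c·r/(c+r), c·a/(c+r), b + a²/(2(c+r)))`. -/
noncomputable def liftOp (c : ℝ) : ℝ × ℝ × ℝ × ℝ → ℝ × ℝ × ℝ × ℝ :=
  fun p =>
    (((c + p.2.1) / c) * p.1 + p.2.2.1 / c,
     c * p.2.1 / (c + p.2.1),
     c * p.2.2.1 / (c + p.2.1),
     p.2.2.2 + p.2.2.1 ^ 2 / (2 * (c + p.2.1)))

/-- **Composition law for the lift operators.**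
For `x, y > 0` and any piece parameters `(s, r, a, b)` with `r ≥ 0`:
`P_x(P_y(s,r,a,b)) = P_z(s,r,a,b)` where `z = x·y/(x+y)`. -/
theorem liftOp_comp
    (x y : ℝ) (hx : 0 < x) (hy : 0 < y)
    (s r a b : ℝ) (hr : 0 ≤ r) :
    liftOp x (liftOp y (s, r, a, b)) = liftOp (x * y / (x + y)) (s, r, a, b) := by
  have hxy : x + y ≠ 0 := by positivity
  have hyr : y + r ≠ 0 := by positivity
  have hD : x * y + x * r + y * r ≠ 0 := by positivity
  -- `x * y + x * r + y * r` is the common numerator of the two remaining denominators.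
  have h1 : x + y * r / (y + r) = (x * y + x * r + y * r) / (y + r) := by
    field_simp
  have h2 : x * y / (x + y) + r = (x * y + x * r + y * r) / (x + y) := by
    field_simp
    ring
  simp only [liftOp, h1, h2, Prod.mk.injEq]
  refine ⟨?_, ?_, ?_, ?_⟩
  all_goals
    field_simp
    try ring
end
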